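/- arXiv:math/0510371 — 5 statements merged into one kernel-verified Lean document; each statement's English description precedes it below -/
import Mathlib

section
/- Let 0 < α ≤ 1 and let Λ ∈ ℂ with Im Λ ≠ 0. If w : ℤ → ℂ is a solution of the recurrence (1.eq) and satisfies ∑_{n∈ℤ} |w_n|² (n²+1)^{−1/2} < ∞, then w_n = 0 for all n ∈ ℤ. -/
open Complex

/-- A sequence `w : ℤ → ℂ` is a solution of the recurrence (1.eq):
`(n+1/2) w_{n+1} - (2/α) √(n²-Λ) w_n + (n-1/2) w_{n-1} = 0` for all `n ∈ ℤ`,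
where `√` is the principal branch of the complex square root. -/
def IsRecSolution (α : ℝ) (Λ : ℂ) (w : ℤ → ℂ) : Prop :=
  ∀ n : ℤ, ((n : ℂ) + 1 / 2) * w (n + 1)
      - (2 / (α : ℂ)) * (((n : ℂ) ^ 2 - Λ) ^ ((1 : ℂ) / 2)) * w n
      + ((n : ℂ) - 1 / 2) * w (n - 1) = 0


lemma aux_not_summable (f : ℕ → ℝ) (c : ℝ) (hc : 0 < c) (N : ℕ) (hf : ∀ n, N ≤ n → c ≤ f n)
    (hs : Summable fun n : ℕ => f n / ((n : ℝ) + 1)) : False := by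
  have h1 : Summable fun n : ℕ => f (n + N) / (((n + N : ℕ) : ℝ) + 1) :=
    (summable_nat_add_iff (f := fun n : ℕ => f n / ((n : ℝ) + 1)) N).2 hs
  have h2 : Summable fun n : ℕ => c / (((n + N : ℕ) : ℝ) + 1) := by
    refine Summable.of_nonneg_of_le (fun n => by positivity) (fun n => ?_) h1
    gcongr
    exact hf _ (by omega)
  have h3 : Summable fun n : ℕ => c / ((n : ℝ) + 1) :=
    (summable_nat_add_iff (f := fun n : ℕ => c / ((n : ℝ) + 1)) N).1 h2
  have h4 : Summable fun n : ℕ => 1 / (((n + 1 : ℕ) : ℝ)) := by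
    have := h3.mul_left c⁻¹
    refine this.congr (fun n => ?_)
    push_cast
    field_simp
  exact Real.not_summable_one_div_natCast
    ((summable_nat_add_iff (f := fun n : ℕ => 1 / (n : ℝ)) 1).1 h4)

lemma aux_half (w q : ℕ → ℂ) (C : ℝ) (hC : 0 ≤ C)
    (hq : ∀ n : ℕ, -(C / ((n : ℝ) + 2)) ≤ (q (n + 1)).re - 2 * ((n : ℝ) + 1))
    (hrec : ∀ n : ℕ, ((n : ℂ) + 3 / 2) * w (n + 2) - q (n + 1) * w (n + 1)
      + ((n : ℂ) + 1 / 2) * w n = 0)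
    (hs : Summable fun n : ℕ => normSq (w n) / ((n : ℝ) + 1)) :
    Summable fun n : ℕ => |((n : ℝ) + 1 / 2) * (w (n + 1) * (starRingEnd ℂ) (w n)).im|
      / ((n : ℝ) + 1) := by
  set S : ℕ → ℝ := fun n => ((n : ℝ) + 1 / 2) *
    ((w (n + 1)).re * (w n).re + (w (n + 1)).im * (w n).im - normSq (w n)) with hS
  set g : ℕ → ℝ := fun n => normSq (w n) / ((n : ℝ) + 1) with hg
  have hg0 : ∀ n, 0 ≤ g n := fun n => div_nonneg (normSq_nonneg _) (by positivity)
  set T : ℕ → ℝ := fun n => S n + C * ∑ k ∈ Finset.range (n + 1), g k with hT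
  set e : ℕ → ℝ := fun n => ((n : ℝ) + 1 / 2) * normSq (w (n + 1) - w n) with he
  have he0 : ∀ n, 0 ≤ e n := fun n => mul_nonneg (by positivity) (normSq_nonneg _)
  have hstep : ∀ n, e n ≤ T (n + 1) - T n := by
    intro n
    have hre := congrArg Complex.re (hrec n)
    have him := congrArg Complex.im (hrec n)
    have e1 : ((n : ℂ) + 3 / 2) = (((n : ℝ) + 3 / 2 : ℝ) : ℂ) := by push_cast; rfl
    have e2 : ((n : ℂ) + 1 / 2) = (((n : ℝ) + 1 / 2 : ℝ) : ℂ) := by push_cast; rfl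
    rw [e1, e2] at hre him
    simp only [add_re, sub_re, mul_re, ofReal_re, ofReal_im, zero_mul, sub_zero, zero_re] at hre
    simp only [add_im, sub_im, mul_im, ofReal_re, ofReal_im, zero_mul, add_zero, zero_im] at him
    have key : S (n + 1) - S n = e n
        + ((q (n + 1)).re - 2 * ((n : ℝ) + 1)) * normSq (w (n + 1)) := by
      simp only [hS, he, normSq_apply, sub_re, sub_im]
      push_cast
      have : n + 1 + 1 = n + 2 := rfl
      rw [this]
      linear_combination (w (n + 1)).re * hre + (w (n + 1)).im * him
    have h1 := mul_le_mul_of_nonneg_right (hq n) (normSq_nonneg (w (n + 1)))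
    have h2 : T (n + 1) - T n = S (n + 1) - S n + C * g (n + 1) := by
      simp only [hT]
      rw [Finset.sum_range_succ _ (n + 1)]
      ring
    have h3 : C * g (n + 1) = C / ((n : ℝ) + 2) * normSq (w (n + 1)) := by
      simp only [hg]
      push_cast
      have : (n : ℝ) + 1 + 1 = n + 2 := by ring
      rw [this]
      ring
    rw [h2, h3, key]
    linarith
  have hmono : Monotone T := monotone_nat_of_le_succ (fun n => by linarith [hstep n, he0 n])
  have hfreq : ∀ N, ∃ n, N ≤ n ∧ S n ≤ 0 := by
    intro N
    by_contra! hcon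
    have hlt : ∀ n, N ≤ n → normSq (w n) < normSq (w (n + 1)) := by
      intro n hn
      have h := hcon n hn
      simp only [hS] at h
      have h' := (mul_pos_iff_of_pos_left (by positivity)).1 h
      simp only [normSq_apply] at h' ⊢
      nlinarith [sq_nonneg ((w (n + 1)).re - (w n).re), sq_nonneg ((w (n + 1)).im - (w n).im)]
    have hge : ∀ n, N + 1 ≤ n → normSq (w (N + 1)) ≤ normSq (w n) := by
      intro n hn
      induction n, hn using Nat.le_induction with
      | base => exact le_rfl
      | succ k hk ih => exact ih.trans (hlt k (by omega)).le
    exact aux_not_summable (fun n => normSq (w n)) (normSq (w (N + 1)))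
      ((normSq_nonneg _).trans_lt (hlt N le_rfl)) (N + 1) hge hs
  have hTB : ∀ n, T n ≤ C * ∑' k, g k := by
    intro n
    obtain ⟨m, hm, hSm⟩ := hfreq n
    have h1 : ∑ k ∈ Finset.range (m + 1), g k ≤ ∑' k, g k :=
      hs.sum_le_tsum _ (fun k _ => hg0 k)
    have h2 := mul_le_mul_of_nonneg_left h1 hC
    have h3 := hmono hm
    have h4 : T m = S m + C * ∑ k ∈ Finset.range (m + 1), g k := rfl
    linarith
  have hesum : Summable e := by
    refine summable_of_sum_range_le (c := C * ∑' k, g k - T 0) he0 (fun n => ?_)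
    have : ∑ i ∈ Finset.range n, e i ≤ T n - T 0 := by
      rw [← Finset.sum_range_sub]
      exact Finset.sum_le_sum (fun i _ => hstep i)
    linarith [hTB n]
  refine Summable.of_nonneg_of_le (fun n => by positivity) (fun n => ?_) (hesum.add hs)
  have hp : (0 : ℝ) < n + 1 := by positivity
  have hn0 : (0 : ℝ) ≤ n := by positivity
  rw [div_le_iff₀ hp]
  have hgg : g n * ((n : ℝ) + 1) = normSq (w n) := by
    simp only [hg]; field_simp
  have : (e n + normSq (w n) / ((n : ℝ) + 1)) * ((n : ℝ) + 1)
      = e n * ((n : ℝ) + 1) + normSq (w n) := by field_simp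
  rw [this, abs_le]
  simp only [he, normSq_apply, sub_re, sub_im, mul_im, conj_re, conj_im]
  generalize (w (n + 1)).re = c
  generalize (w (n + 1)).im = d
  generalize (w n).re = a
  generalize (w n).im = b
  set x := (n : ℝ) + 1 / 2 with hx
  have hx0 : 0 ≤ x := by positivity
  have hn1 : (n : ℝ) + 1 = x + 1 / 2 := by rw [hx]; ring
  rw [hn1]
  have hD : 0 ≤ x * ((c - a) * (c - a) + (d - b) * (d - b)) :=
    mul_nonneg hx0 (add_nonneg (mul_self_nonneg _) (mul_self_nonneg _))
  constructor
  · nlinarith [sq_nonneg (x * (d - b) + a), sq_nonneg (x * (c - a) - b), sq_nonneg a, sq_nonneg b,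
      sq_nonneg (x * (d - b)), sq_nonneg (x * (c - a))]
  · nlinarith [sq_nonneg (x * (d - b) - a), sq_nonneg (x * (c - a) + b), sq_nonneg a, sq_nonneg b,
      sq_nonneg (x * (d - b)), sq_nonneg (x * (c - a))]

lemma aux_sqrt_sq (z : ℂ) : (z ^ ((1 : ℂ) / 2)) ^ 2 = z := by
  rw [one_div]
  exact_mod_cast Complex.cpow_nat_inv_pow z (n := 2) (by norm_num)

lemma aux_sqrt_re (z : ℂ) : 0 ≤ (z ^ ((1 : ℂ) / 2)).re := by
  by_cases hz : z = 0
  · subst hz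
    simp
  rw [Complex.cpow_def_of_ne_zero hz, Complex.exp_re]
  refine mul_nonneg (Real.exp_pos _).le (Real.cos_nonneg_of_mem_Icc ?_)
  have : (Complex.log z * (1 / 2)).im = z.arg / 2 := by
    have h2 : (1 / 2 : ℂ) = ((1 / 2 : ℝ) : ℂ) := by push_cast; rfl
    rw [h2, Complex.im_mul_ofReal, Complex.log_im]
    ring
  rw [this]
  constructor
  · linarith [Complex.neg_pi_lt_arg z]
  · linarith [Complex.arg_le_pi z]

lemma aux_right (α : ℝ) (hα : 0 < α) (hα1 : α ≤ 1) (Λ : ℂ) (w : ℤ → ℂ)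
    (hw : IsRecSolution α Λ w)
    (hsum : Summable fun n : ℤ => ‖w n‖ ^ 2 * ((n : ℝ) ^ 2 + 1) ^ (-(1 / 2 : ℝ))) :
    Summable fun n : ℕ => |((n : ℝ) + 1 / 2) *
      (w ((n : ℤ) + 1) * (starRingEnd ℂ) (w (n : ℤ))).im| / ((n : ℝ) + 1) := by
  have h := aux_half (fun n : ℕ => w (n : ℤ))
    (fun n : ℕ => (2 / (α : ℂ)) * (((n : ℂ) ^ 2 - Λ) ^ ((1 : ℂ) / 2))) (4 * ‖Λ‖) (by positivity)
    ?_ ?_ ?_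
  · simpa using h
  · intro n
    have hsq := aux_sqrt_sq (((n + 1 : ℕ) : ℂ) ^ 2 - Λ)
    have hre := aux_sqrt_re (((n + 1 : ℕ) : ℂ) ^ 2 - Λ)
    generalize (((n + 1 : ℕ) : ℂ) ^ 2 - Λ) ^ ((1 : ℂ) / 2) = d at hsq hre
    have h2 : (2 / (α : ℂ)) = ((2 / α : ℝ) : ℂ) := by push_cast; rfl
    rw [h2, Complex.re_ofReal_mul]
    have hr := congrArg Complex.re hsq
    have hc : ((n + 1 : ℕ) : ℂ) = (((n : ℝ) + 1 : ℝ) : ℂ) := by push_cast; rfl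
    rw [hc, ← ofReal_pow, sub_re, ofReal_re, pow_two, mul_re] at hr
    have hL := Complex.re_le_norm Λ
    have hL0 := norm_nonneg Λ
    have hA : 2 ≤ 2 / α := by rw [le_div_iff₀ hα]; linarith
    have hAd : 2 * d.re ≤ 2 / α * d.re := mul_le_mul_of_nonneg_right hA hre
    have hn0 : (0 : ℝ) ≤ n := by positivity
    suffices hh : ((n : ℝ) + 1) - d.re ≤ 2 * ‖Λ‖ / ((n : ℝ) + 2) by
      have : 4 * ‖Λ‖ / ((n : ℝ) + 2) = 2 * (2 * ‖Λ‖ / ((n : ℝ) + 2)) := by ring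
      linarith
    rw [le_div_iff₀ (by positivity)]
    by_cases hcase : (n : ℝ) + 1 ≤ d.re
    · nlinarith
    · push Not at hcase
      nlinarith [mul_nonneg hre (sub_nonneg.2 hcase.le), mul_nonneg hn0 (sub_nonneg.2 hcase.le),
        sq_nonneg d.im]
  · intro n
    have h := hw ((n : ℤ) + 1)
    have e1 : (n : ℤ) + 1 + 1 = ((n + 2 : ℕ) : ℤ) := by push_cast; ring
    have e2 : (n : ℤ) + 1 - 1 = (n : ℤ) := by ring
    rw [e1, e2] at h
    push_cast at h ⊢
    linear_combination h
  · have hN := hsum.comp_injective (Nat.cast_injective (R := ℤ))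
    refine Summable.of_nonneg_of_le
      (fun n => div_nonneg (normSq_nonneg _) (by positivity)) (fun n => ?_) hN
    simp only [Function.comp, Int.cast_natCast]
    rw [Complex.normSq_eq_norm_sq, div_eq_mul_inv, Real.rpow_neg (by positivity), ← Real.sqrt_eq_rpow]
    gcongr
    rw [Real.sqrt_le_left (by positivity)]
    have hn0 : (0 : ℝ) ≤ n := by positivity
    nlinarith

lemma aux_reflect (α : ℝ) (Λ : ℂ) (w : ℤ → ℂ) (hw : IsRecSolution α Λ w) :
    IsRecSolution α Λ (fun n => (-1 : ℂ) ^ n * w (-n)) := by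
  intro n
  have h := hw (-n)
  have e1 : -n + 1 = -(n - 1) := by ring
  have e2 : -n - 1 = -(n + 1) := by ring
  rw [e1, e2] at h
  push_cast at h
  dsimp only
  rw [zpow_add₀ (by norm_num), zpow_sub₀ (by norm_num)]
  rw [neg_sq] at h
  simp only [zpow_one, div_neg, div_one]
  linear_combination (-1 : ℂ) ^ n * h

/-- Core of Theorem 3.3(1): for `0 < α ≤ 1` and nonreal `Λ`, any solution of the
recurrence (1.eq) satisfying `∑_{n∈ℤ} |w_n|² (n²+1)^{-1/2} < ∞` vanishes identically. -/
theorem rec_solution_trivial_of_alpha_le_one (α : ℝ) (hα : 0 < α) (hα1 : α ≤ 1)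
    (Λ : ℂ) (hΛ : Λ.im ≠ 0) (w : ℤ → ℂ) (hw : IsRecSolution α Λ w)
    (hsum : Summable fun n : ℤ => ‖w n‖ ^ 2 * ((n : ℝ) ^ 2 + 1) ^ (-(1 / 2 : ℝ))) :
    ∀ n : ℤ, w n = 0 := by
  have hR := aux_right α hα hα1 Λ w hw hsum
  have hsum' : Summable fun n : ℤ => ‖(fun n : ℤ => (-1 : ℂ) ^ n * w (-n)) n‖ ^ 2
      * ((n : ℝ) ^ 2 + 1) ^ (-(1 / 2 : ℝ)) := by
    have h := hsum.comp_injective neg_injective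
    refine h.congr (fun n => ?_)
    simp [Function.comp]
  have hL := aux_right α hα hα1 Λ _ (aux_reflect α Λ w hw) hsum'
  set J : ℤ → ℝ := fun n => ((n : ℝ) + 1 / 2) * (w (n + 1) * (starRingEnd ℂ) (w n)).im with hJ
  set d : ℤ → ℂ := fun n => ((n : ℂ) ^ 2 - Λ) ^ ((1 : ℂ) / 2) with hd
  have hR' : Summable fun n : ℕ => |J (n : ℤ)| / ((n : ℝ) + 1) := by
    refine hR.congr (fun n => ?_)
    simp [hJ]
  have hL' : Summable fun n : ℕ => |J (-(n : ℤ) - 1)| / ((n : ℝ) + 1) := by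
    refine hL.congr (fun n => ?_)
    congr 1
    rw [← abs_neg]
    congr 1
    have e1 : -((n : ℤ) + 1) = -(n : ℤ) - 1 := by ring
    have e2 : -(n : ℤ) - 1 + 1 = -(n : ℤ) := by ring
    simp only [hJ, e1, e2]
    push_cast
    have e3 : ((-1 : ℂ) ^ (n : ℤ)) * (-1 : ℂ) ^ (n : ℤ) = 1 := by
      rw [← mul_zpow]; simp
    have e4 : (-1 : ℂ) ^ ((n : ℤ) + 1) * w (-(n : ℤ) - 1)
        * (starRingEnd ℂ) ((-1 : ℂ) ^ (n : ℤ) * w (-(n : ℤ)))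
        = -(w (-(n : ℤ) - 1) * (starRingEnd ℂ) (w (-(n : ℤ)))) := by
      rw [zpow_add₀ (by norm_num), map_mul, map_zpow₀, map_neg, map_one, zpow_one]
      linear_combination (-(w (-(n : ℤ) - 1) * (starRingEnd ℂ) (w (-(n : ℤ))))) * e3
    rw [e4]
    simp only [neg_im, mul_im, conj_re, conj_im]
    ring
  have hstep : ∀ n : ℤ, J n - J (n - 1) = 2 / α * (d n).im * normSq (w n) := by
    intro n
    have h := hw n
    have h2 : (2 / (α : ℂ)) = ((2 / α : ℝ) : ℂ) := by push_cast; rfl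
    have e1 : ((n : ℂ) + 1 / 2) = (((n : ℝ) + 1 / 2 : ℝ) : ℂ) := by push_cast; rfl
    have e2 : ((n : ℂ) - 1 / 2) = (((n : ℝ) - 1 / 2 : ℝ) : ℂ) := by push_cast; rfl
    change ((n : ℂ) + 1 / 2) * w (n + 1) - (2 / (α : ℂ)) * d n * w n
      + ((n : ℂ) - 1 / 2) * w (n - 1) = 0 at h
    rw [h2, e1, e2] at h
    have hre := congrArg Complex.re h
    have him := congrArg Complex.im h
    simp only [add_re, sub_re, mul_re, mul_im, ofReal_re, ofReal_im, zero_mul, sub_zero, zero_re,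
      add_zero] at hre
    simp only [add_im, sub_im, mul_im, mul_re, ofReal_re, ofReal_im, zero_mul, add_zero, zero_im,
      sub_zero] at him
    have e3 : n - 1 + 1 = n := by ring
    simp only [hJ, e3, normSq_apply, mul_im, conj_re, conj_im]
    push_cast
    linear_combination (w n).re * him - (w n).im * hre
  have hdim : ∀ n : ℤ, 2 * (d n).re * (d n).im = -Λ.im := by
    intro n
    have h := congrArg Complex.im (aux_sqrt_sq ((n : ℂ) ^ 2 - Λ))
    change ((d n) ^ 2).im = _ at h
    have hc : (n : ℂ) = ((n : ℝ) : ℂ) := by push_cast; rfl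
    rw [hc, ← ofReal_pow, sub_im, ofReal_im, pow_two, mul_im] at h
    linarith
  have hdre : ∀ n : ℤ, 0 ≤ (d n).re := fun n => aux_sqrt_re _
  have hdre' : ∀ n : ℤ, 0 < (d n).re := by
    intro n
    refine lt_of_le_of_ne (hdre n) (fun h0 => hΛ ?_)
    have := hdim n
    rw [← h0] at this
    linarith
  -- the sign-normalised current
  have hsgn : ∀ n : ℤ, 0 < -Λ.im * (d n).im := by
    intro n
    have hne : (d n).im ≠ 0 := by
      intro h0
      have := hdim n
      rw [h0] at this
      apply hΛ
      linarith
    rw [← hdim n]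
    have := mul_pos (hdre' n) (mul_self_pos.2 hne)
    nlinarith
  set K : ℤ → ℝ := fun n => -Λ.im * J n with hK
  have hKstep : ∀ n : ℤ, K n - K (n - 1) = 2 / α * (-Λ.im * (d n).im) * normSq (w n) := by
    intro n
    simp only [hK]
    linear_combination -Λ.im * hstep n
  have hKmono : Monotone K := by
    refine monotone_int_of_le_succ (fun n => ?_)
    have h := hKstep (n + 1)
    have e : n + 1 - 1 = n := by ring
    rw [e] at h
    have : 0 ≤ 2 / α * (-Λ.im * (d (n + 1)).im) * normSq (w (n + 1)) :=
      mul_nonneg (mul_nonneg (by positivity) (hsgn _).le) (normSq_nonneg _)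
    linarith
  have hKR : Summable fun n : ℕ => |K (n : ℤ)| / ((n : ℝ) + 1) := by
    refine (hR'.mul_left |Λ.im|).congr (fun n => ?_)
    simp only [hK, abs_mul, abs_neg]
    ring
  have hKL : Summable fun n : ℕ => |K (-(n : ℤ) - 1)| / ((n : ℝ) + 1) := by
    refine (hL'.mul_left |Λ.im|).congr (fun n => ?_)
    simp only [hK, abs_mul, abs_neg]
    ring
  have hK0 : ∀ m : ℤ, K m = 0 := by
    intro m
    rcases lt_trichotomy (K m) 0 with h | h | h
    · exfalso
      refine aux_not_summable _ (-K m) (by linarith) m.natAbs (fun n hn => ?_) hKL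
      have : K (-(n : ℤ) - 1) ≤ K m := hKmono (by omega)
      exact (neg_le_neg this).trans (neg_le_abs _)
    · exact h
    · exfalso
      refine aux_not_summable _ (K m) h m.natAbs (fun n hn => ?_) hKR
      have : K m ≤ K (n : ℤ) := hKmono (by omega)
      exact this.trans (le_abs_self _)
  intro n
  have h := hKstep n
  rw [hK0, hK0, sub_zero] at h
  have hpos : 0 < 2 / α * (-Λ.im * (d n).im) := mul_pos (by positivity) (hsgn n)
  rcases mul_eq_zero.1 h.symm with h | h
  · exact absurd h hpos.ne'
  · exact normSq_eq_zero.1 h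
end

section
/- Let α > 1 and let Λ ∈ ℂ with Im Λ ≠ 0. Then every solution w : ℤ → ℂ of the recurrence (1.eq) satisfies ∑_{n∈ℤ} |w_n|² (n²+1)^{−1/2} < ∞. Consequently, the complex vector space of solutions of (1.eq) satisfying this summability condition has dimension exactly 2. -/
open Complex

/-- Exact growth identity for the energy, in real coordinates. -/
lemma energy_step (n c K : ℝ) (hn : 0 ≤ n) (hc : |c| < 1) (hK : 0 ≤ K) (s x y z : ℂ)
    (hs : ‖s - ((n + 1 : ℝ) : ℂ)‖ ≤ K / (n + 1))
    (h : ((n + 3 / 2 : ℝ) : ℂ) * x - 2 * (c : ℂ) * s * y + ((n + 1 / 2 : ℝ) : ℂ) * z = 0) :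
    (n + 3 / 2) * (((n + 3 / 2) * ‖x‖ ^ 2 + (n + 1 / 2) * ‖y‖ ^ 2
        - 2 * c * (n + 1) * (x.re * y.re + x.im * y.im))
      - ((n + 1 / 2) * ‖y‖ ^ 2 + (n - 1 / 2) * ‖z‖ ^ 2
        - 2 * c * n * (y.re * z.re + y.im * z.im)))
      ≤ (8 * K + 4 * K ^ 2 + 2) * (‖y‖ ^ 2 + ‖z‖ ^ 2) := by
  obtain ⟨d, rfl⟩ : ∃ d : ℂ, s = ((n + 1 : ℝ) : ℂ) + d := ⟨s - ((n + 1 : ℝ) : ℂ), by ring⟩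
  rw [add_sub_cancel_left] at hs
  have hm : 0 < n + 1 := by linarith
  have hmd : (n + 1) * ‖d‖ ≤ K := by
    rw [le_div_iff₀ hm] at hs; linarith
  have hd0 := norm_nonneg d
  have hdK : ‖d‖ ≤ K := by nlinarith
  have hdre := Complex.abs_re_le_norm d
  have hcc : c ^ 2 ≤ 1 := by
    rw [← sq_abs]; nlinarith [abs_nonneg c]
  -- bound 1
  have b1 : 4 * c ^ 2 * (‖d‖ ^ 2 + (n + 1) * d.re) * ‖y‖ ^ 2 ≤ 4 * (K ^ 2 + K) * ‖y‖ ^ 2 := by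
    apply mul_le_mul_of_nonneg_right _ (by positivity)
    have e1 : ‖d‖ ^ 2 + (n + 1) * d.re ≤ K ^ 2 + K := by
      have := le_abs_self d.re
      nlinarith
    nlinarith [sq_nonneg c, sq_nonneg K]
  have hyz : |y.re * z.re + y.im * z.im| ≤ ‖y‖ * ‖z‖ := by
    have := Complex.abs_re_le_norm (y * (starRingEnd ℂ) z)
    simpa [Complex.mul_re] using this
  have hyz2 : ‖y‖ * ‖z‖ ≤ (‖y‖ ^ 2 + ‖z‖ ^ 2) / 2 := by nlinarith [sq_nonneg (‖y‖ - ‖z‖)]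
  have b2 : -c * (y.re * z.re + y.im * z.im) ≤ ‖y‖ ^ 2 + ‖z‖ ^ 2 := by
    have h1 := neg_abs_le (c * (y.re * z.re + y.im * z.im))
    rw [abs_mul] at h1
    have h2 : |c| * |y.re * z.re + y.im * z.im| ≤ 1 * (‖y‖ * ‖z‖) := by gcongr
    nlinarith [sq_nonneg ‖y‖, sq_nonneg ‖z‖]
  have b3 : -4 * c * (n + 1 / 2) * (d * y * (starRingEnd ℂ) z).re
      ≤ 4 * K * (‖y‖ ^ 2 + ‖z‖ ^ 2) := by
    have h0 := Complex.abs_re_le_norm (d * y * (starRingEnd ℂ) z)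
    rw [norm_mul, norm_mul, Complex.norm_conj] at h0
    have h1 := neg_abs_le (c * ((n + 1 / 2) * (d * y * (starRingEnd ℂ) z).re))
    rw [abs_mul, abs_mul, abs_of_nonneg (show (0:ℝ) ≤ n + 1 / 2 by linarith)] at h1
    have h2 : |c| * ((n + 1 / 2) * |(d * y * (starRingEnd ℂ) z).re|)
        ≤ 1 * ((n + 1) * (‖d‖ * ‖y‖ * ‖z‖)) := by
      gcongr
      norm_num
    have h3 : (n + 1) * (‖d‖ * ‖y‖ * ‖z‖) ≤ K * (‖y‖ * ‖z‖) := by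
      have : (n + 1) * (‖d‖ * ‖y‖ * ‖z‖) = ((n + 1) * ‖d‖) * (‖y‖ * ‖z‖) := by ring
      rw [this]; gcongr
    have h4 : K * (‖y‖ * ‖z‖) ≤ K * (‖y‖ ^ 2 + ‖z‖ ^ 2) := by
      gcongr; nlinarith [sq_nonneg ‖y‖, sq_nonneg ‖z‖]
    linarith
  have hre := congrArg Complex.re h
  have him := congrArg Complex.im h
  have key : (n + 3 / 2) * (((n + 3 / 2) * ‖x‖ ^ 2 + (n + 1 / 2) * ‖y‖ ^ 2
        - 2 * c * (n + 1) * (x.re * y.re + x.im * y.im))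
      - ((n + 1 / 2) * ‖y‖ ^ 2 + (n - 1 / 2) * ‖z‖ ^ 2
        - 2 * c * n * (y.re * z.re + y.im * z.im)))
      = 4 * c ^ 2 * (‖d‖ ^ 2 + (n + 1) * d.re) * ‖y‖ ^ 2 + ‖z‖ ^ 2
        + (-c * (y.re * z.re + y.im * z.im))
        + (-4 * c * (n + 1 / 2) * (d * y * (starRingEnd ℂ) z).re) := by
    obtain ⟨x1, x2⟩ := x
    obtain ⟨y1, y2⟩ := y
    obtain ⟨z1, z2⟩ := z
    obtain ⟨d1, d2⟩ := d
    simp only [← Complex.normSq_eq_norm_sq, Complex.normSq_mk]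
    simp [Complex.mul_re, Complex.mul_im] at hre him ⊢
    have hx1 : x1 = (2 * c * ((n + 1 + d1) * y1 - d2 * y2) - (n + 1 / 2) * z1) / (n + 3 / 2) := by
      rw [eq_div_iff (by linarith)]; linarith
    have hx2 : x2 = (2 * c * ((n + 1 + d1) * y2 + d2 * y1) - (n + 1 / 2) * z2) / (n + 3 / 2) := by
      rw [eq_div_iff (by linarith)]; linarith
    have : n + 3 / 2 ≠ 0 := by linarith
    have : n * 2 + 3 ≠ 0 := by linarith
    rw [hx1, hx2]
    field_simp
    ring
  rw [key]
  nlinarith [sq_nonneg ‖y‖, sq_nonneg ‖z‖]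

/-- Decay of the solutions of a half-line recurrence. -/
lemma half_line_decay (c K : ℝ) (hc : |c| < 1) (hK : 0 ≤ K) (s u : ℕ → ℂ)
    (hs : ∀ n : ℕ, ‖s n - (((n : ℝ) + 1 : ℝ) : ℂ)‖ ≤ K / ((n : ℝ) + 1))
    (h : ∀ n : ℕ, (((n : ℝ) + 3 / 2 : ℝ) : ℂ) * u (n + 2) - 2 * (c : ℂ) * s n * u (n + 1)
      + (((n : ℝ) + 1 / 2 : ℝ) : ℂ) * u n = 0) :
    ∃ (C : ℝ) (N : ℕ), 0 < N ∧ ∀ n ≥ N, ‖u n‖ ^ 2 ≤ C / n := by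
  obtain ⟨N, hN⟩ := exists_nat_gt (1 / (1 - |c|))
  have hc1 : 0 < 1 - |c| := by linarith
  have hN0 : 0 < (N : ℝ) := lt_trans (by positivity) hN
  have hN1 : 1 < (N : ℝ) * (1 - |c|) := by rwa [div_lt_iff₀ hc1] at hN
  set κ := (1 - |c|) / 2 with hκ
  have hκ0 : 0 < κ := by positivity
  let E : ℕ → ℝ := fun n => ((n : ℝ) + 1 / 2) * ‖u (n + 1)‖ ^ 2 + ((n : ℝ) - 1 / 2) * ‖u n‖ ^ 2
        - 2 * c * n * ((u (n + 1)).re * (u n).re + (u (n + 1)).im * (u n).im)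
  have hpos : ∀ n ≥ N, κ * n * (‖u (n + 1)‖ ^ 2 + ‖u n‖ ^ 2) ≤ E n := by
    intro n hn
    have hnN : (N : ℝ) ≤ n := by exact_mod_cast hn
    have hn0 : (0 : ℝ) ≤ n := by positivity
    have hyz : |(u (n + 1)).re * (u n).re + (u (n + 1)).im * (u n).im| ≤ ‖u (n + 1)‖ * ‖u n‖ := by
      have := Complex.abs_re_le_norm (u (n + 1) * (starRingEnd ℂ) (u n))
      simpa [Complex.mul_re] using this
    have hyz2 : ‖u (n + 1)‖ * ‖u n‖ ≤ (‖u (n + 1)‖ ^ 2 + ‖u n‖ ^ 2) / 2 := by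
      nlinarith [sq_nonneg (‖u (n + 1)‖ - ‖u n‖)]
    have h1 := le_abs_self (c * ((u (n + 1)).re * (u n).re + (u (n + 1)).im * (u n).im))
    rw [abs_mul] at h1
    have h2 : |c| * |(u (n + 1)).re * (u n).re + (u (n + 1)).im * (u n).im|
        ≤ |c| * ((‖u (n + 1)‖ ^ 2 + ‖u n‖ ^ 2) / 2) := by
      gcongr; linarith
    have h3 : n * (c * ((u (n + 1)).re * (u n).re + (u (n + 1)).im * (u n).im))
        ≤ n * (|c| * ((‖u (n + 1)‖ ^ 2 + ‖u n‖ ^ 2) / 2)) :=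
      mul_le_mul_of_nonneg_left (h1.trans h2) hn0
    have h4 : 1 ≤ (n : ℝ) * (1 - |c|) := by nlinarith
    have h5 : (‖u (n + 1)‖ ^ 2 + ‖u n‖ ^ 2) * 1
        ≤ (‖u (n + 1)‖ ^ 2 + ‖u n‖ ^ 2) * ((n : ℝ) * (1 - |c|)) := by gcongr
    simp only [E, hκ]
    nlinarith [sq_nonneg ‖u (n + 1)‖]
  have hdiff : ∀ n : ℕ, ((n : ℝ) + 3 / 2) * (E (n + 1) - E n)
        ≤ (8 * K + 4 * K ^ 2 + 2) * (‖u (n + 1)‖ ^ 2 + ‖u n‖ ^ 2) := by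
    intro n
    have e := energy_step n c K n.cast_nonneg hc hK (s n) (u (n + 2)) (u (n + 1)) (u n) (hs n) (h n)
    refine le_trans (le_of_eq ?_) e
    simp only [E]
    push_cast
    ring_nf
  clear_value E κ
  set D : ℝ := (8 * K + 4 * K ^ 2 + 2) / κ with hD
  have hD0 : 0 ≤ D := by positivity
  have hstep : ∀ n ≥ N, E (n + 1) ≤ (1 + (D / n - D / ((n : ℝ) + 1))) * E n := by
    intro n hn
    have hnN : (N : ℝ) ≤ n := by exact_mod_cast hn
    have hn0 : (0 : ℝ) < n := by linarith
    have p := hpos n hn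
    have e' := hdiff n
    have p' : ‖u (n + 1)‖ ^ 2 + ‖u n‖ ^ 2 ≤ E n / (κ * n) := by
      rw [le_div_iff₀ (by positivity)]; linarith
    have hE : 0 ≤ E n := le_trans (by positivity) p
    have q : ((n : ℝ) + 3 / 2) * (E (n + 1) - E n) ≤ D / n * E n := by
      refine e'.trans ((mul_le_mul_of_nonneg_left p' (by positivity)).trans (le_of_eq ?_))
      rw [hD]; field_simp
    have q2 : E (n + 1) - E n ≤ D / n * E n / ((n : ℝ) + 1) := by
      rw [le_div_iff₀ (by positivity)]
      by_cases hh : 0 ≤ E (n + 1) - E n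
      · nlinarith
      · have : 0 ≤ D / n * E n := by positivity
        nlinarith
    have : D / n - D / ((n : ℝ) + 1) = D / n / ((n : ℝ) + 1) := by field_simp; ring
    rw [this]
    have : D / n * E n / ((n : ℝ) + 1) = D / n / ((n : ℝ) + 1) * E n := by ring
    linarith
  have hmono : ∀ n ≥ N, E n * Real.exp (D / n) ≤ E N * Real.exp (D / N) := by
    intro n hn
    induction n, hn using Nat.le_induction with
    | base => exact le_rfl
    | succ n hn ih =>
      refine le_trans ?_ ih
      have hE : 0 ≤ E n := le_trans (by positivity) (hpos n hn)
      have h1 : E (n + 1) ≤ Real.exp (D / n - D / ((n : ℝ) + 1)) * E n := by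
        refine (hstep n hn).trans (mul_le_mul_of_nonneg_right ?_ hE)
        have := Real.add_one_le_exp (D / n - D / ((n : ℝ) + 1))
        linarith
      calc E (n + 1) * Real.exp (D / ((n + 1 : ℕ) : ℝ))
          ≤ (Real.exp (D / n - D / ((n : ℝ) + 1)) * E n) * Real.exp (D / ((n : ℝ) + 1)) := by
            push_cast
            exact mul_le_mul_of_nonneg_right h1 (Real.exp_pos _).le
        _ = E n * Real.exp (D / n) := by
            rw [mul_comm (Real.exp _) (E n), mul_assoc, ← Real.exp_add]; ring_nf
  refine ⟨E N * Real.exp (D / N) / κ, N, by exact_mod_cast hN0, ?_⟩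
  intro n hn
  have hnN : (N : ℝ) ≤ n := by exact_mod_cast hn
  have hn0 : (0 : ℝ) < n := by linarith
  have hE : 0 ≤ E n := le_trans (by positivity) (hpos n hn)
  have h1 : E n ≤ E N * Real.exp (D / N) := by
    have := Real.one_le_exp (show 0 ≤ D / n by positivity)
    nlinarith [hmono n hn]
  have h2 : κ * n * ‖u n‖ ^ 2 ≤ E n := by
    refine le_trans ?_ (hpos n hn)
    have := sq_nonneg ‖u (n + 1)‖
    gcongr; linarith
  rw [le_div_iff₀ hn0, le_div_iff₀ hκ0]
  linarith

lemma half_line_summable (c K : ℝ) (hc : |c| < 1) (hK : 0 ≤ K) (s u : ℕ → ℂ)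
    (hs : ∀ n : ℕ, ‖s n - (((n : ℝ) + 1 : ℝ) : ℂ)‖ ≤ K / ((n : ℝ) + 1))
    (h : ∀ n : ℕ, (((n : ℝ) + 3 / 2 : ℝ) : ℂ) * u (n + 2) - 2 * (c : ℂ) * s n * u (n + 1)
      + (((n : ℝ) + 1 / 2 : ℝ) : ℂ) * u n = 0) :
    Summable fun n : ℕ => ‖u n‖ ^ 2 * ((n : ℝ) ^ 2 + 1) ^ (-(1 / 2 : ℝ)) := by
  obtain ⟨C, N, hN, hb⟩ := half_line_decay c K hc hK s u hs h
  have hsum : Summable fun n : ℕ => C * (1 / (n : ℝ) ^ 2) :=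
    (Real.summable_one_div_nat_pow.mpr (by norm_num)).mul_left C
  refine Summable.of_norm_bounded_eventually_nat hsum ?_
  filter_upwards [Filter.eventually_ge_atTop N] with n hn
  have hn0 : (0 : ℝ) < n := by exact_mod_cast lt_of_lt_of_le hN hn
  rw [Real.norm_of_nonneg (by positivity)]
  have h1 : ((n : ℝ) ^ 2 + 1) ^ (-(1 / 2 : ℝ)) ≤ 1 / n := by
    rw [Real.rpow_neg (by positivity), ← Real.sqrt_eq_rpow, one_div]
    apply inv_anti₀ hn0
    apply Real.le_sqrt_of_sq_le
    linarith
  calc _ ≤ C / n * (1 / n) := by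
        apply mul_le_mul (hb n hn) h1 (by positivity)
        exact le_trans (by positivity) (hb n hn)
    _ = _ := by ring

lemma sqrt_near (Λ : ℂ) (n : ℕ) :
    ‖((((n : ℂ) + 1) ^ 2 - Λ) ^ ((1 : ℂ) / 2)) - (((n : ℝ) + 1 : ℝ) : ℂ)‖ ≤ ‖Λ‖ / ((n : ℝ) + 1) := by
  set v : ℂ := ((n : ℂ) + 1) ^ 2 - Λ with hv
  set s := v ^ ((1 : ℂ) / 2) with hsdef
  have hsq : s ^ 2 = v := by
    rw [hsdef, one_div]
    exact_mod_cast Complex.cpow_nat_inv_pow v (n := 2) (by norm_num)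
  have hre : 0 ≤ s.re := by
    by_cases h0 : v = 0
    · rw [hsdef, h0, Complex.zero_cpow (by norm_num)]; simp
    · rw [hsdef, Complex.cpow_def_of_ne_zero h0, Complex.exp_re]
      refine mul_nonneg (Real.exp_pos _).le (Real.cos_nonneg_of_mem_Icc ?_)
      have him : (Complex.log v * (1 / 2)).im = v.arg / 2 := by
        rw [show (1 / 2 : ℂ) = ((1 / 2 : ℝ) : ℂ) by push_cast; rfl, Complex.im_mul_ofReal,
          Complex.log_im]; ring
      rw [him]
      constructor <;> linarith [Complex.neg_pi_lt_arg v, Complex.arg_le_pi v]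
  have hm : (0 : ℝ) < (n : ℝ) + 1 := by positivity
  have hprod : (s - (((n : ℝ) + 1 : ℝ) : ℂ)) * (s + (((n : ℝ) + 1 : ℝ) : ℂ)) = -Λ := by
    have : (s - (((n : ℝ) + 1 : ℝ) : ℂ)) * (s + (((n : ℝ) + 1 : ℝ) : ℂ))
      = s ^ 2 - ((n : ℂ) + 1) ^ 2 := by push_cast; ring
    rw [this, hsq, hv]; ring
  have hn := congrArg norm hprod
  rw [norm_mul, norm_neg] at hn
  have hge : (n : ℝ) + 1 ≤ ‖s + (((n : ℝ) + 1 : ℝ) : ℂ)‖ := by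
    refine le_trans ?_ (Complex.re_le_norm _)
    rw [Complex.add_re, Complex.ofReal_re]; linarith
  rw [le_div_iff₀ hm, ← hn]
  gcongr

lemma sol_summable (α : ℝ) (hα : 1 < α) (Λ : ℂ) (w : ℤ → ℂ) (hw : IsRecSolution α Λ w) :
    Summable fun n : ℤ => ‖w n‖ ^ 2 * ((n : ℝ) ^ 2 + 1) ^ (-(1 / 2 : ℝ)) := by
  have hα0 : 0 < α := by linarith
  have hc : |1 / α| < 1 := by
    rw [abs_of_pos (by positivity), div_lt_one hα0]; exact hα
  have hc' : |-(1 / α)| < 1 := by rwa [abs_neg]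
  apply Summable.of_nat_of_neg
  · refine (half_line_summable (1 / α) ‖Λ‖ hc (norm_nonneg _) _ (fun n : ℕ => w n)
      (sqrt_near Λ) ?_).congr ?_
    · intro n
      have := hw ((n : ℤ) + 1)
      rw [add_sub_cancel_right, show (n : ℤ) + 1 + 1 = ((n + 2 : ℕ) : ℤ) by push_cast; ring] at this
      push_cast at this ⊢
      rw [← this]; ring
    · intro n; simp
  · refine (half_line_summable (-(1 / α)) ‖Λ‖ hc' (norm_nonneg _) _ (fun n : ℕ => w (-n))
      (sqrt_near Λ) ?_).congr ?_
    · intro n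
      have := hw (-((n : ℤ) + 1))
      rw [show -((n : ℤ) + 1) + 1 = -(n : ℤ) by ring,
        show -((n : ℤ) + 1) - 1 = -((n + 2 : ℕ) : ℤ) by push_cast; ring] at this
      push_cast at this ⊢
      rw [neg_sq] at this
      rw [← neg_eq_zero, ← this]; ring
    · intro n; simp

lemma half_ne (n : ℤ) : (n : ℂ) + 1 / 2 ≠ 0 := by
  intro h
  have h2 : (2 * n + 1 : ℂ) = 0 := by linear_combination 2 * h
  have h3 : (2 * n + 1 : ℤ) = 0 := by exact_mod_cast h2
  omega

lemma half_ne' (n : ℤ) : (n : ℂ) - 1 / 2 ≠ 0 := by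
  intro h
  have h2 : (2 * n - 1 : ℂ) = 0 := by linear_combination 2 * h
  have h3 : (2 * n - 1 : ℤ) = 0 := by exact_mod_cast h2
  omega

lemma sol_unique (α : ℝ) (Λ : ℂ) (w : ℤ → ℂ) (hw : IsRecSolution α Λ w)
    (h0 : w 0 = 0) (h1 : w 1 = 0) : w = 0 := by
  have key : ∀ n : ℤ, w n = 0 ∧ w (n + 1) = 0 := by
    intro n
    induction n with
    | zero => exact ⟨h0, by simpa using h1⟩
    | succ n ih =>
      refine ⟨ih.2, ?_⟩
      have := hw ((n : ℤ) + 1)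
      rw [add_sub_cancel_right, ih.1, ih.2, mul_zero, mul_zero, sub_zero, add_zero] at this
      exact (mul_eq_zero.mp this).resolve_left (half_ne _)
    | pred n ih =>
      have := hw (-(n : ℤ))
      rw [ih.1, ih.2, mul_zero, mul_zero, sub_zero, zero_add] at this
      refine ⟨(mul_eq_zero.mp this).resolve_left (half_ne' _), ?_⟩
      rw [sub_add_cancel]; exact ih.1
  funext n
  exact (key n).1

lemma sol_exists (α : ℝ) (Λ : ℂ) (p q : ℂ) :
    ∃ w : ℤ → ℂ, IsRecSolution α Λ w ∧ w 0 = p ∧ w 1 = q := by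
  let r : ℤ → ℂ := fun n => (2 / (α : ℂ)) * (((n : ℂ) ^ 2 - Λ) ^ ((1 : ℂ) / 2))
  let F : ℕ → ℂ × ℂ := fun k => Nat.rec (p, q) (fun k v =>
    (v.2, (r (k + 1) * v.2 - (((k + 1 : ℤ) : ℂ) - 1 / 2) * v.1) / (((k + 1 : ℤ) : ℂ) + 1 / 2))) k
  let B : ℕ → ℂ × ℂ := fun k => Nat.rec (q, p) (fun k v =>
    (v.2, (r (-k) * v.2 - (((-k : ℤ) : ℂ) + 1 / 2) * v.1) / (((-k : ℤ) : ℂ) - 1 / 2))) k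
  have hF : ∀ k, F (k + 1) = ((F k).2, (r (k + 1) * (F k).2
    - (((k + 1 : ℤ) : ℂ) - 1 / 2) * (F k).1) / (((k + 1 : ℤ) : ℂ) + 1 / 2)) := fun _ => rfl
  have hB : ∀ k, B (k + 1) = ((B k).2, (r (-k) * (B k).2
    - (((-k : ℤ) : ℂ) + 1 / 2) * (B k).1) / (((-k : ℤ) : ℂ) - 1 / 2)) := fun _ => rfl
  let w : ℤ → ℂ := fun n => if 0 ≤ n then (F n.toNat).1 else (B (-n).toNat).2
  have wF : ∀ k : ℕ, w k = (F k).1 := by intro k; simp [w]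
  have wB : ∀ k : ℕ, w (-k) = (B k).2 := by
    intro k
    rcases Nat.eq_zero_or_pos k with rfl | hk
    · simp [w, F, B]
    · have : ¬ (0 : ℤ) ≤ -k := by omega
      simp [w, this]; intro h; omega
  have wB' : ∀ k : ℕ, w (-k + 1) = (B k).1 := by
    intro k
    cases k with
    | zero => simp [w, F, B]
    | succ k =>
      rw [show (-((k + 1 : ℕ) : ℤ) + 1) = -(k : ℤ) by push_cast; ring, wB, hB]
  refine ⟨w, ?_, ?_, ?_⟩
  · intro n
    rcases le_or_gt n 0 with hn | hn
    · obtain ⟨k, rfl⟩ : ∃ k : ℕ, n = -k := ⟨(-n).toNat, by omega⟩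
      rw [wB' k, wB k, show (-(k : ℤ) - 1) = -((k + 1 : ℕ) : ℤ) by push_cast; ring, wB, hB]
      rw [mul_div_cancel₀ _ (half_ne' _)]
      simp only [r]; ring
    · obtain ⟨k, rfl⟩ : ∃ k : ℕ, n = k + 1 := ⟨(n - 1).toNat, by omega⟩
      have e1 : w ((k : ℤ) + 1) = (F k).2 := by
        have := wF (k + 1)
        rw [hF k] at this
        simpa using this
      have e2 : w ((k : ℤ) + 1 + 1) = (r (k + 1) * (F k).2
          - (((k + 1 : ℤ) : ℂ) - 1 / 2) * (F k).1) / (((k + 1 : ℤ) : ℂ) + 1 / 2) := by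
        have := wF (k + 1 + 1)
        rw [hF (k + 1), hF k] at this
        simpa using this
      rw [add_sub_cancel_right, wF k, e1, e2, mul_div_cancel₀ _ (half_ne _)]
      simp only [r]; ring
  · simpa [F] using wF 0
  · simpa [F] using wF 1

/-- Core of Theorem 3.3(2): for `α > 1` and nonreal `Λ`, every solution of the
recurrence (1.eq) satisfies `∑_{n∈ℤ} |w_n|² (n²+1)^{-1/2} < ∞`, and consequently the
space of solutions satisfying this summability condition has dimension exactly `2`. -/
theorem rec_solutions_summable_and_two_dimensional (α : ℝ) (hα : 1 < α)
    (Λ : ℂ) (hΛ : Λ.im ≠ 0) :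
    (∀ w : ℤ → ℂ, IsRecSolution α Λ w →
        Summable fun n : ℤ => ‖w n‖ ^ 2 * ((n : ℝ) ^ 2 + 1) ^ (-(1 / 2 : ℝ))) ∧
      (∃ w₁ w₂ : ℤ → ℂ,
        (IsRecSolution α Λ w₁ ∧
          Summable fun n : ℤ => ‖w₁ n‖ ^ 2 * ((n : ℝ) ^ 2 + 1) ^ (-(1 / 2 : ℝ))) ∧
        (IsRecSolution α Λ w₂ ∧
          Summable fun n : ℤ => ‖w₂ n‖ ^ 2 * ((n : ℝ) ^ 2 + 1) ^ (-(1 / 2 : ℝ))) ∧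
        LinearIndependent ℂ ![w₁, w₂] ∧
        ∀ w : ℤ → ℂ, IsRecSolution α Λ w →
          (Summable fun n : ℤ => ‖w n‖ ^ 2 * ((n : ℝ) ^ 2 + 1) ^ (-(1 / 2 : ℝ))) →
          ∃ a b : ℂ, w = a • w₁ + b • w₂) := by
  have hall := sol_summable α hα Λ
  refine ⟨hall, ?_⟩
  obtain ⟨w₁, h₁, h10, h11⟩ := sol_exists α Λ 1 0
  obtain ⟨w₂, h₂, h20, h21⟩ := sol_exists α Λ 0 1
  refine ⟨w₁, w₂, ⟨h₁, hall _ h₁⟩, ⟨h₂, hall _ h₂⟩, ?_, ?_⟩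
  · rw [LinearIndependent.pair_iff]
    intro a b hab
    have e0 := congrFun hab 0
    have e1 := congrFun hab 1
    simp [h10, h11, h20, h21] at e0 e1
    exact ⟨e0, e1⟩
  · intro w hw _
    refine ⟨w 0, w 1, ?_⟩
    have : w - (w 0 • w₁ + w 1 • w₂) = 0 := by
      apply sol_unique α Λ
      · intro n
        have a := hw n
        have b := h₁ n
        have c := h₂ n
        simp only [Pi.sub_apply, Pi.add_apply, Pi.smul_apply, smul_eq_mul]
        linear_combination a - w 0 * b - w 1 * c
      · simp [h10, h20]
      · simp [h11, h21]
    exact sub_eq_zero.mp this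
end

section
/- Let α > 0 with α ≠ 1, and let Λ ∈ ℂ \ [0,∞). Let λ₊ = 1/α + √(1/α² − 1) and λ₋ = 1/α − √(1/α² − 1) be the two roots of λ² − (2/α)λ + 1 = 0 (principal branch of the square root; for α > 1 these roots are non-real of modulus 1). Then there exist a constant C > 0 and two sequences w⁺, w⁻ : {0,1,2,…} → ℂ, each satisfying (n+1/2)·w_{n+1} − (2/α)·√(n²−Λ)·w_n + (n−1/2)·w_{n−1} = 0 for all n ≥ 1, such that |n^{1/2} · λ₊^{−n} · w⁺_n − 1| ≤ C/n and |n^{1/2} · λ₋^{−n} · w⁻_n − 1| ≤ C/n for all n ≥ 1. -/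
open Complex

/-- Backward extension of a solution of a three-term recurrence. -/
lemma ba_extend (A B C : ℕ → ℂ) (hC : ∀ n, 1 ≤ n → C n ≠ 0) (N : ℕ) :
    ∀ w : ℕ → ℂ, (∀ n, N + 1 ≤ n → A n * w (n + 1) - B n * w n + C n * w (n - 1) = 0) →
    ∃ w' : ℕ → ℂ, (∀ n, N ≤ n → w' n = w n) ∧
      ∀ n, 1 ≤ n → A n * w' (n + 1) - B n * w' n + C n * w' (n - 1) = 0 := by
  induction N with
  | zero => intro w hw; exact ⟨w, fun _ _ => rfl, hw⟩
  | succ N ih =>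
    intro w hw
    obtain ⟨w', h1, h2⟩ := ih (Function.update w N
      ((B (N+1) * w (N+1) - A (N+1) * w (N+2)) / C (N+1))) (by
        intro n hn
        rcases Nat.eq_or_lt_of_le hn with rfl | hlt
        · have := hC (N+1) (by omega)
          rw [Function.update_of_ne (by omega), Function.update_of_ne (by omega)]
          simp only [Nat.add_sub_cancel, Function.update_self]
          field_simp
          ring
        · rw [Function.update_of_ne (by omega), Function.update_of_ne (by omega),
            Function.update_of_ne (by omega)]
          exact hw n (by omega))
    refine ⟨w', fun n hn => ?_, h2⟩
    rw [h1 n (by omega), Function.update_of_ne (by omega)]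

lemma ba_tele (n N : ℕ) (hN : 1 ≤ N) :
    HasSum (fun j : ℕ => 1 / ((n + j + N : ℝ)) - 1 / ((n + (j+1 : ℕ) + N : ℝ))) (1 / (n + N : ℝ)) := by
  have hN' : (1:ℝ) ≤ N := by exact_mod_cast hN
  rw [hasSum_iff_tendsto_nat_of_nonneg]
  · have : ∀ m : ℕ, ∑ j ∈ Finset.range m, (1 / ((n + j + N : ℝ)) - 1 / ((n + (j+1 : ℕ) + N : ℝ)))
        = 1 / (n + N : ℝ) - 1 / ((m : ℝ) + (n + N)) := by
      intro m
      rw [Finset.sum_range_sub' (fun j : ℕ => 1 / ((n + j + N : ℝ)))]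
      simp; ring_nf
    simp only [this]
    have h := (tendsto_const_nhds (x := (1:ℝ))).div_atTop
      (Filter.tendsto_atTop_add_const_right _ ((n:ℝ) + N) (tendsto_natCast_atTop_atTop (R := ℝ)))
    simpa using (tendsto_const_nhds (x := 1 / (n + N : ℝ))).sub h
  · intro j
    rw [sub_nonneg]
    apply one_div_le_one_div_of_le
    · positivity
    · push_cast; linarith

/-- summation bound for the tail. -/
lemma ba_tail (n N : ℕ) (hN : 1 ≤ N) :
    Summable (fun k : ℕ => if n ≤ k then 1 / ((k + N + 1 : ℝ))^2 else 0) ∧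
    ∑' k : ℕ, (if n ≤ k then 1 / ((k + N + 1 : ℝ))^2 else 0) ≤ 1 / (n + N : ℝ) := by
  have hN' : (1:ℝ) ≤ N := by exact_mod_cast hN
  have ht := ba_tele n N hN
  have hle : ∀ j : ℕ, 1 / (((j + n : ℕ) + N + 1 : ℝ))^2 ≤
      1 / ((n + j + N : ℝ)) - 1 / ((n + (j+1 : ℕ) + N : ℝ)) := by
    intro j
    push_cast
    have h1 : (0:ℝ) < n + j + N := by positivity
    rw [div_sub_div _ _ h1.ne' (by positivity), div_le_div_iff₀ (by positivity) (by positivity)]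
    nlinarith
  have hs : Summable (fun j : ℕ => 1 / (((j + n : ℕ) + N + 1 : ℝ))^2) :=
    Summable.of_nonneg_of_le (fun j => by positivity) hle ht.summable
  have hs' : Summable (fun k : ℕ => if n ≤ k then 1 / ((k + N + 1 : ℝ))^2 else 0) := by
    rw [← summable_nat_add_iff n]
    simpa using hs
  refine ⟨hs', ?_⟩
  rw [← hs'.sum_add_tsum_nat_add n]
  rw [Finset.sum_eq_zero (fun i hi => by simp at hi; simp [hi]), zero_add, ← ht.tsum_eq]
  simp only [Nat.le_add_left, if_true]
  exact hs.tsum_le_tsum hle ht.summable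

/-- summation bound for the head. -/
lemma ba_head (r : ℝ) (hr0 : 0 ≤ r) (hr1 : r < 1) (n N : ℕ) (hN : 1 ≤ N) :
    ∑ k ∈ Finset.range n, r ^ (n - 1 - k) / ((k + N + 1 : ℝ))^2 ≤
      (∑' j : ℕ, ((j:ℝ) + 1) * r ^ j) / (n + N : ℝ) := by
  have hN' : (1:ℝ) ≤ N := by exact_mod_cast hN
  have hs : Summable (fun j : ℕ => ((j:ℝ) + 1) * r ^ j) := by
    have h1 := summable_pow_mul_geometric_of_norm_lt_one 1 (r := r)
      (by rwa [Real.norm_of_nonneg hr0])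
    have h2 := summable_geometric_of_lt_one hr0 hr1
    refine (h1.add h2).congr fun j => ?_
    simp; ring
  calc _ ≤ ∑ k ∈ Finset.range n, ((((n - 1 - k : ℕ):ℝ) + 1) * r ^ (n - 1 - k)) / (n + N : ℝ) := by
        apply Finset.sum_le_sum
        intro k hk
        have hk' := Finset.mem_range.1 hk
        obtain ⟨m, rfl⟩ : ∃ m, n = k + 1 + m := ⟨n - (k+1), by omega⟩
        have : k + 1 + m - 1 - k = m := by omega
        rw [this]
        have hp : 0 ≤ r ^ m := by positivity
        rw [div_le_div_iff₀ (by positivity) (by positivity)]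
        push_cast
        have hx : (1:ℝ) ≤ k + N + 1 := by linarith [show (0:ℝ) ≤ k by positivity]
        have hm : (0:ℝ) ≤ m := by positivity
        have : (k + 1 + m + N : ℝ) ≤ (m + 1) * (k + N + 1 : ℝ)^2 := by
          nlinarith [mul_nonneg hm (sub_nonneg.2 hx), mul_nonneg (by positivity : (0:ℝ) ≤ (m+1) * (k+N+1)) (sub_nonneg.2 hx)]
        nlinarith [mul_le_mul_of_nonneg_left this hp]
    _ = (∑ j ∈ Finset.range n, ((j:ℝ) + 1) * r ^ j) / (n + N : ℝ) := by
        rw [← Finset.sum_div, Finset.sum_range_reflect (fun j : ℕ => ((j:ℝ) + 1) * r ^ j)]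
    _ ≤ _ := by
        gcongr
        exact hs.sum_le_tsum _ (fun j _ => by positivity)

/-- Green's function. -/
lemma ba_green (l : ℂ) (h0 : l ≠ 0) (h1 : l ^ 2 ≠ 1) :
    ∃ D : ℝ, 0 < D ∧ ∃ G : ℕ → ℕ → ℂ,
      (∀ n k, l * G (n+2) k - (l + l⁻¹) * G (n+1) k + l⁻¹ * G n k = if n = k then 1 else 0) ∧
      ∀ N : ℕ, 1 ≤ N → ∀ n, Summable (fun k : ℕ => ‖G n k‖ / ((k + N + 1 : ℝ))^2) ∧
        ∑' k : ℕ, ‖G n k‖ / ((k + N + 1 : ℝ))^2 ≤ D / (n + N : ℝ) := by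
  have h1' : 1 - l ^ 2 ≠ 0 := sub_ne_zero.2 (Ne.symm h1)
  set c : ℂ := l / (1 - l^2) with hc
  have hc0 : c ≠ 0 := div_ne_zero h0 h1'
  have hcp : 0 < ‖c‖ := norm_pos_iff.2 hc0
  rcases le_or_gt ‖l‖ 1 with hl | hl
  · refine ⟨2 * ‖c‖, by positivity, fun n k => if n ≤ k then c * (1 - l ^ (2 * (k + 1 - n))) else 0,
      ?_, ?_⟩
    · intro n k
      beta_reduce
      rcases lt_trichotomy n k with h | rfl | h
      · obtain ⟨m, rfl⟩ : ∃ m, k = n + 1 + m := ⟨k - (n+1), by omega⟩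
        rw [if_pos (by omega : n + 1 ≤ n + 1 + m), if_pos (by omega : n ≤ n + 1 + m), if_neg (by omega : ¬ n = n + 1 + m)]
        have e1 : n + 1 + m + 1 - (n+1) = m + 1 := by omega
        have e2 : n + 1 + m + 1 - n = m + 2 := by omega
        have e3 : n + 1 + m + 1 - (n+2) = m := by omega
        rw [e1, e2, e3]
        rcases Nat.eq_zero_or_pos m with rfl | hm
        · rw [if_neg (by omega)]
          field_simp
          ring
        · rw [if_pos (by omega)]
          field_simp
          ring
      · simp only [if_neg (by omega : ¬ n + 2 ≤ n), if_neg (by omega : ¬ n + 1 ≤ n), le_refl, if_true]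
        rw [hc, show n + 1 - n = 1 by omega]
        field_simp
        ring
      · simp only [if_neg (by omega : ¬ n + 2 ≤ k), if_neg (by omega : ¬ n + 1 ≤ k), if_neg (by omega : ¬ n ≤ k), if_neg (by omega : ¬ n = k)]
        ring
    · intro N hN n
      obtain ⟨t1, t2⟩ := ba_tail n N hN
      have hle : ∀ k : ℕ, ‖(if n ≤ k then c * (1 - l ^ (2 * (k + 1 - n))) else 0)‖ / ((k + N + 1 : ℝ))^2 ≤
          2 * ‖c‖ * (if n ≤ k then 1 / ((k + N + 1 : ℝ))^2 else 0) := by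
        intro k
        split_ifs with h
        · rw [norm_mul]
          have : ‖1 - l ^ (2 * (k + 1 - n))‖ ≤ 2 := by
            refine (norm_sub_le _ _).trans ?_
            rw [norm_one, norm_pow]
            linarith [pow_le_one₀ (n := 2 * (k + 1 - n)) (norm_nonneg l) hl]
          rw [mul_one_div]
          gcongr ?_ / _
          nlinarith
        · simp
      have hs := Summable.of_nonneg_of_le (fun k => by positivity) hle (t1.mul_left (2 * ‖c‖))
      refine ⟨hs, (hs.tsum_le_tsum hle (t1.mul_left _)).trans ?_⟩
      rw [tsum_mul_left, div_eq_mul_one_div]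
      gcongr
  · set r : ℝ := ‖(l⁻¹)^2‖ with hr
    have hr0 : 0 ≤ r := norm_nonneg _
    have hr1 : r < 1 := by
      rw [hr, norm_pow, norm_inv]
      exact pow_lt_one₀ (by positivity) (inv_lt_one_of_one_lt₀ hl) (by norm_num)
    set E : ℝ := ∑' j : ℕ, ((j:ℝ) + 1) * r ^ j with hE
    have hE0 : 0 ≤ E := tsum_nonneg fun j => by positivity
    refine ⟨‖c‖ * (1 + E), by positivity, fun n k => if n ≤ k then c else c * ((l⁻¹)^2) ^ (n - 1 - k),
      ?_, ?_⟩
    · intro n k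
      beta_reduce
      rcases lt_trichotomy n k with h | rfl | h
      · rw [if_pos (by omega : n + 1 ≤ k), if_pos (by omega : n ≤ k), if_neg (by omega : ¬ n = k)]
        rcases Nat.eq_or_lt_of_le h with rfl | h
        · rw [if_neg (by omega), show n + 2 - 1 - n.succ = 0 by omega]
          ring
        · rw [if_pos (by omega)]
          ring
      · simp only [if_neg (by omega : ¬ n + 2 ≤ n), if_neg (by omega : ¬ n + 1 ≤ n), le_refl, if_true]
        rw [hc, show n + 2 - 1 - n = 1 by omega, show n + 1 - 1 - n = 0 by omega]
        field_simp
        ring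
      · obtain ⟨m, rfl⟩ : ∃ m, n = k + 1 + m := ⟨n - (k+1), by omega⟩
        simp only [if_neg (by omega : ¬ k + 1 + m + 2 ≤ k), if_neg (by omega : ¬ k + 1 + m + 1 ≤ k), if_neg (by omega : ¬ k + 1 + m ≤ k), if_neg (by omega : ¬ k + 1 + m = k)]
        rw [show k + 1 + m + 2 - 1 - k = m + 2 by omega, show k + 1 + m + 1 - 1 - k = m + 1 by omega,
          show k + 1 + m - 1 - k = m by omega]
        rw [pow_add _ m 2, pow_add _ m 1]
        field_simp
        ring
    · intro N hN n
      obtain ⟨t1, t2⟩ := ba_tail n N hN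
      have hh := ba_head r hr0 hr1 n N hN
      have heq : ∀ k : ℕ, ‖(if n ≤ k then c else c * ((l⁻¹)^2) ^ (n - 1 - k))‖ / ((k + N + 1 : ℝ))^2 =
          ‖c‖ * ((if n ≤ k then 1 / ((k + N + 1 : ℝ))^2 else 0) +
            (if k ∈ Finset.range n then r ^ (n - 1 - k) / ((k + N + 1 : ℝ))^2 else 0)) := by
        intro k
        by_cases h : n ≤ k
        · simp [h, div_eq_mul_inv]
        · simp only [if_neg h, Finset.mem_range, if_pos (not_le.1 h)]
          rw [norm_mul, norm_pow, hr]; ring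
      have hs2 : HasSum (fun k => if k ∈ Finset.range n then r ^ (n - 1 - k) / ((k + N + 1 : ℝ))^2 else 0)
          (∑ k ∈ Finset.range n, r ^ (n - 1 - k) / ((k + N + 1 : ℝ))^2) := by
        have := hasSum_sum_of_ne_finset_zero (L := SummationFilter.unconditional ℕ) (s := Finset.range n) (f := fun k => if k ∈ Finset.range n then r ^ (n - 1 - k) / ((k + N + 1 : ℝ))^2 else 0) (fun b hb => if_neg hb)
        convert this using 1
        exact Finset.sum_congr rfl fun k hk => (if_pos hk).symm
      have hH := (t1.hasSum.add hs2).mul_left ‖c‖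
      simp only [heq]
      refine ⟨hH.summable, ?_⟩
      rw [hH.tsum_eq, mul_div_assoc, add_div]
      gcongr

/-- Perturbed constant coefficient recurrence. -/
lemma ba_fix (l : ℂ) (h0 : l ≠ 0) (h1 : l ^ 2 ≠ 1) (K : ℝ) (hK : 0 < K)
    (P Q R : ℕ → ℂ)
    (hP : ∀ n : ℕ, 2 ≤ n → ‖P n‖ ≤ K / (n:ℝ)^2) (hQ : ∀ n : ℕ, 2 ≤ n → ‖Q n‖ ≤ K / (n:ℝ)^2)
    (hR : ∀ n : ℕ, 2 ≤ n → ‖R n‖ ≤ K / (n:ℝ)^2) :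
    ∃ C : ℝ, 0 < C ∧ ∃ N : ℕ, 1 ≤ N ∧ ∃ u : ℕ → ℂ,
      (∀ k, l * u (k+2) - (l + l⁻¹) * u (k+1) + l⁻¹ * u k =
        P (k+N+1) * u (k+2) + Q (k+N+1) * u (k+1) + R (k+N+1) * u k) ∧
      ∀ n : ℕ, ‖u n - 1‖ ≤ C / (n + N : ℝ) := by
  obtain ⟨D, hD, G, hG, hGs⟩ := ba_green l h0 h1
  obtain ⟨N0, hN0⟩ := exists_nat_ge (6 * K * D)
  set N := N0 + 1 with hNdef
  have hN1 : 1 ≤ N := by omega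
  have hNr : 6 * K * D ≤ (N:ℝ) := by rw [hNdef]; push_cast; linarith
  have hN1' : (1:ℝ) ≤ N := by exact_mod_cast hN1
  let F : (ℕ → ℂ) → ℕ → ℂ := fun u k => P (k+N+1) * u (k+2) + Q (k+N+1) * u (k+1) + R (k+N+1) * u k
  have hFsub : ∀ u v k, F (u - v) k = F u k - F v k := by
    intro u v k; simp only [F, Pi.sub_apply]; ring
  have hF : ∀ (u : ℕ → ℂ) (M : ℝ), (∀ n, ‖u n‖ ≤ M) → ∀ k : ℕ, ‖F u k‖ ≤ 3 * K * M / ((k + N + 1 : ℝ))^2 := by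
    intro u M hu k
    have hk : 2 ≤ k + N + 1 := by omega
    have a1 := hP _ hk
    have a2 := hQ _ hk
    have a3 := hR _ hk
    push_cast at a1 a2 a3
    have hM : 0 ≤ M := (norm_nonneg _).trans (hu 0)
    have hb : 0 ≤ K / ((k + N + 1 : ℝ))^2 := by positivity
    calc ‖F u k‖ ≤ ‖P (k+N+1) * u (k+2)‖ + ‖Q (k+N+1) * u (k+1)‖ + ‖R (k+N+1) * u k‖ := norm_add₃_le
      _ ≤ K / ((k + N + 1 : ℝ))^2 * M + K / ((k + N + 1 : ℝ))^2 * M + K / ((k + N + 1 : ℝ))^2 * M := by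
        simp only [norm_mul]
        gcongr <;> apply hu
      _ = _ := by ring
  have hS : ∀ (u : ℕ → ℂ) (M : ℝ), (∀ n, ‖u n‖ ≤ M) → ∀ n : ℕ,
      Summable (fun k => G n k * F u k) ∧ ‖∑' k, G n k * F u k‖ ≤ 3 * K * M * D / (n + N : ℝ) := by
    intro u M hu n
    have hM : 0 ≤ M := (norm_nonneg _).trans (hu 0)
    obtain ⟨s1, s2⟩ := hGs N hN1 n
    have hle : ∀ k, ‖G n k * F u k‖ ≤ 3 * K * M * (‖G n k‖ / ((k + N + 1 : ℝ))^2) := by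
      intro k
      rw [norm_mul]
      calc _ ≤ ‖G n k‖ * (3 * K * M / ((k + N + 1 : ℝ))^2) := by gcongr; exact hF u M hu k
        _ = _ := by ring
    refine ⟨Summable.of_norm_bounded (s1.mul_left _) hle, ?_⟩
    refine (tsum_of_norm_bounded (s1.mul_left (3 * K * M)).hasSum hle).trans ?_
    rw [tsum_mul_left, mul_div_assoc]
    gcongr
  have hsmall : ∀ (M : ℝ) (n : ℕ), 0 ≤ M → 3 * K * M * D / (n + N : ℝ) ≤ 1/2 * M := by
    intro M n hM
    rw [div_le_iff₀ (by positivity)]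
    have hn : (0:ℝ) ≤ n := by positivity
    nlinarith [mul_le_mul_of_nonneg_right hNr hM, mul_nonneg hM hn]
  let Φ : BoundedContinuousFunction ℕ ℂ → BoundedContinuousFunction ℕ ℂ := fun u =>
    BoundedContinuousFunction.ofNormedAddCommGroupDiscrete (fun n => 1 + ∑' k, G n k * F u k)
      (1 + 1/2 * ‖u‖) (by
        intro n
        refine (norm_add_le _ _).trans ?_
        rw [norm_one]
        gcongr
        exact ((hS u ‖u‖ u.norm_coe_le_norm n).2).trans (hsmall _ n (norm_nonneg _)))
  have hΦ : ContractingWith (1/2) Φ := by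
    refine ⟨by rw [← NNReal.coe_lt_coe]; norm_num, LipschitzWith.of_dist_le_mul fun u v => ?_⟩
    rw [BoundedContinuousFunction.dist_le (by positivity)]
    intro n
    rw [dist_eq_norm, dist_eq_norm]
    have hb : ∀ n, ‖((u : ℕ → ℂ) - v) n‖ ≤ ‖u - v‖ := fun n => (u - v).norm_coe_le_norm n
    have e : Φ u n - Φ v n = ∑' k, G n k * F ((u : ℕ → ℂ) - v) k := by
      change (1 + ∑' k, G n k * F u k) - (1 + ∑' k, G n k * F v k) = _
      rw [add_sub_add_left_eq_sub,
        ← (hS u ‖u‖ u.norm_coe_le_norm n).1.tsum_sub (hS v ‖v‖ v.norm_coe_le_norm n).1]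
      congr 1
      ext k
      rw [hFsub]; ring
    rw [e]
    refine ((hS _ _ hb n).2).trans ((hsmall _ n (norm_nonneg _)).trans ?_)
    simp
  obtain ⟨u, hu⟩ : ∃ u, Φ u = u := ⟨_, hΦ.fixedPoint_isFixedPt⟩
  have hun : ∀ n, u n = 1 + ∑' k, G n k * F u k := fun n => by
    conv_lhs => rw [← hu]
    rfl
  refine ⟨3 * K * (‖u‖ + 1) * D, by positivity, N, hN1, u, ?_, ?_⟩
  · intro k
    change _ = F u k
    have s := fun n => (hS u ‖u‖ u.norm_coe_le_norm n).1
    rw [hun k, hun (k+1), hun (k+2)]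
    have t := (((s (k+2)).hasSum.mul_left l).sub ((s (k+1)).hasSum.mul_left (l + l⁻¹))).add ((s k).hasSum.mul_left l⁻¹)
    have t2 : HasSum (fun j => l * (G (k+2) j * F u j) - (l + l⁻¹) * (G (k+1) j * F u j) + l⁻¹ * (G k j * F u j)) (F u k) := by
      have := hasSum_ite_eq k (F u k)
      refine this.congr_fun ?_ |> id
      intro j
      have h := hG k j
      calc _ = (l * G (k+2) j - (l + l⁻¹) * G (k+1) j + l⁻¹ * G k j) * F u j := by ring
        _ = _ := by
          rw [h]
          by_cases hj : j = k
          · subst hj; simp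
          · rw [if_neg hj, if_neg (Ne.symm hj), zero_mul]
    have := t.unique t2
    linear_combination this
  · intro n
    rw [hun n, add_sub_cancel_left]
    exact (hS u (‖u‖ + 1) (fun n => (u.norm_coe_le_norm n).trans (by linarith)) n).2

lemma ba_sqrt_est (x : ℝ) (hx : 1 ≤ x) :
    |1 - (x + 1/2) / (√x * √(x+1))| ≤ 1 / (4 * x * (x+1)) := by
  have hx0 : 0 ≤ x := by linarith
  rw [← Real.sqrt_mul hx0]
  set y := √(x * (x+1)) with hy
  have hy2 : y ^ 2 = x * (x+1) := Real.sq_sqrt (by positivity)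
  have hyp : 0 < y := Real.sqrt_pos.2 (by positivity)
  have hle : y ≤ x + 1/2 := by nlinarith
  rw [abs_sub_comm, abs_of_nonneg (by rw [sub_nonneg, le_div_iff₀ hyp]; linarith)]
  rw [div_sub_one hyp.ne', mul_assoc, ← hy2, div_le_div_iff₀ hyp (by positivity)]
  have : (x + 1/2 - y) * (x + 1/2 + y) = 1/4 := by nlinarith
  have h3 : (x + 1/2 - y) * (4 * y) ≤ 1 := by nlinarith
  nlinarith

lemma ba_alg (l L y0 y1 y2 n s u0 u1 u2 : ℂ) (h0 : l ≠ 0) (q0 : y0 ≠ 0) (q1 : y1 ≠ 0)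
    (q2 : y2 ≠ 0) (hn : y1 ^ 2 = n)
    (h : l * u2 - (l + l⁻¹) * u1 + l⁻¹ * u0 = l * (1 - (n + 1/2) / (y1 * y2)) * u2
      + (l + l⁻¹) * (s / n - 1) * u1 + l⁻¹ * (1 - (n - 1/2) / (y1 * y0)) * u0) :
    (n + 1/2) * (L * l * l / y2 * u2) - (l + l⁻¹) * s * (L * l / y1 * u1)
      + (n - 1/2) * (L / y0 * u0) = 0 := by
  have h' : l * ((n + 1/2) / (y1 * y2)) * u2 - (l + l⁻¹) * (s / n) * u1
      + l⁻¹ * ((n - 1/2) / (y1 * y0)) * u0 = 0 := by linear_combination h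
  have h3 : (n + 1/2) * (L * l * l / y2 * u2) - (l + l⁻¹) * s * (L * l / y1 * u1)
      + (n - 1/2) * (L / y0 * u0) = L * l * y1 * (l * ((n + 1/2) / (y1 * y2)) * u2
        - (l + l⁻¹) * (s / n) * u1 + l⁻¹ * ((n - 1/2) / (y1 * y0)) * u0) := by
    rw [← hn]
    field_simp
  rw [h3, h', mul_zero]

lemma ba_one (β : ℂ) (l : ℂ) (h0 : l ≠ 0) (h1 : l ^ 2 ≠ 1) (hβ : β = l + l⁻¹) (Λ : ℂ) :
    ∃ C : ℝ, 0 < C ∧ ∃ w : ℕ → ℂ,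
      (∀ n : ℕ, 1 ≤ n →
        ((n : ℂ) + 1 / 2) * w (n + 1)
          - β * (((n : ℂ) ^ 2 - Λ) ^ ((1 : ℂ) / 2)) * w n
          + ((n : ℂ) - 1 / 2) * w (n - 1) = 0) ∧
      (∀ n : ℕ, 1 ≤ n → ‖(Real.sqrt n : ℂ) * l ^ (-(n : ℤ)) * w n - 1‖ ≤ C / n) := by
  let s : ℕ → ℂ := fun n => ((n : ℂ) ^ 2 - Λ) ^ ((1 : ℂ) / 2)
  have hs2 : ∀ n, s n ^ 2 = (n:ℂ)^2 - Λ := fun n => by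
    have := Complex.cpow_nat_inv_pow ((n:ℂ)^2 - Λ) (two_ne_zero)
    simp only [s]
    convert this using 3
    norm_num
  have hsre : ∀ n, 0 ≤ (s n).re := fun n => by
    simp only [s]
    have h := Complex.cpow_ofReal_re ((n:ℂ)^2 - Λ) (1/2)
    push_cast at h
    rw [h]
    have h1 := Complex.arg_le_pi ((n:ℂ)^2 - Λ)
    have h2 := Complex.neg_pi_lt_arg ((n:ℂ)^2 - Λ)
    exact mul_nonneg (by positivity) (Real.cos_nonneg_of_mem_Icc ⟨by linarith, by linarith⟩)
  let P : ℕ → ℂ := fun n => l * (1 - (((n + 1/2) / (√(n:ℝ) * √((n:ℝ)+1)) : ℝ) : ℂ))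
  let Q : ℕ → ℂ := fun n => (l + l⁻¹) * (s n / n - 1)
  let R : ℕ → ℂ := fun n => l⁻¹ * (1 - (((n - 1/2) / (√(n:ℝ) * √((n:ℝ)-1)) : ℝ) : ℂ))
  have hP : ∀ n : ℕ, 2 ≤ n → ‖P n‖ ≤ ‖l‖ / (n:ℝ)^2 := by
    intro n hn
    have hn' : (2:ℝ) ≤ n := by exact_mod_cast hn
    simp only [P]
    rw [norm_mul, div_eq_mul_one_div ‖l‖]
    refine mul_le_mul_of_nonneg_left ?_ (norm_nonneg _)
    rw [← Complex.ofReal_one, ← Complex.ofReal_sub, Complex.norm_real, Real.norm_eq_abs]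
    refine (ba_sqrt_est n (by linarith)).trans ?_
    apply one_div_le_one_div_of_le (by positivity)
    nlinarith
  have hR : ∀ n : ℕ, 2 ≤ n → ‖R n‖ ≤ ‖l⁻¹‖ / (n:ℝ)^2 := by
    intro n hn
    have hn' : (2:ℝ) ≤ n := by exact_mod_cast hn
    simp only [R]
    rw [norm_mul, div_eq_mul_one_div ‖l⁻¹‖]
    refine mul_le_mul_of_nonneg_left ?_ (norm_nonneg _)
    rw [← Complex.ofReal_one, ← Complex.ofReal_sub, Complex.norm_real, Real.norm_eq_abs]
    have := ba_sqrt_est (n - 1) (by linarith)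
    rw [sub_add_cancel, mul_comm (√((n:ℝ)-1)), show (n:ℝ) - 1 + 1/2 = n - 1/2 by ring] at this
    refine this.trans ?_
    apply one_div_le_one_div_of_le (by positivity)
    nlinarith
  have hQ : ∀ n : ℕ, 2 ≤ n → ‖Q n‖ ≤ ‖l + l⁻¹‖ * ‖Λ‖ / (n:ℝ)^2 := by
    intro n hn
    have hn' : (2:ℝ) ≤ n := by exact_mod_cast hn
    have hnC : (n:ℂ) ≠ 0 := by exact_mod_cast (by omega : n ≠ 0)
    simp only [Q]
    rw [norm_mul, mul_div_assoc]
    gcongr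
    have e : (s n / n - 1) * (s n + n) = - Λ / n := by
      field_simp
      linear_combination hs2 n
    have hlow : (n:ℝ) ≤ ‖s n + n‖ := by
      refine le_trans ?_ (Complex.re_le_norm _)
      simpa using hsre n
    have e2 : ‖s n / n - 1‖ * ‖s n + n‖ = ‖Λ‖ / n := by
      rw [← norm_mul, e, norm_div, norm_neg, Complex.norm_natCast]
    rw [le_div_iff₀ (by positivity)]
    have e3 : ‖s n / n - 1‖ * n ≤ ‖Λ‖ / n := by
      rw [← e2]; gcongr
    rw [le_div_iff₀ (by positivity)] at e3
    linarith
  set K : ℝ := ‖l‖ + ‖l⁻¹‖ + ‖l + l⁻¹‖ * ‖Λ‖ with hK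
  have hl : 0 < ‖l‖ := norm_pos_iff.2 h0
  obtain ⟨C, hC, N, hN, u, hu, hub⟩ := ba_fix l h0 h1 K (by positivity) P Q R
    (fun n hn => (hP n hn).trans (by gcongr; rw [hK, add_assoc]; exact le_add_of_nonneg_right (by positivity)))
    (fun n hn => (hQ n hn).trans (by gcongr; rw [hK]; exact le_add_of_nonneg_left (by positivity)))
    (fun n hn => (hR n hn).trans (by
      gcongr; rw [hK, add_right_comm]; exact le_add_of_nonneg_left (by positivity)))
  let w0 : ℕ → ℂ := fun n => l ^ n / (√(n:ℝ) : ℂ) * u (n - N)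
  obtain ⟨w, hw1, hw2⟩ := ba_extend (fun n => (n:ℂ) + 1/2) (fun n => β * s n) (fun n => (n:ℂ) - 1/2)
    (by
      intro n hn h
      have : ((n:ℝ) - 1/2 : ℝ) = 0 := by exact_mod_cast (by push_cast; exact h : (((n:ℝ) - 1/2 : ℝ) : ℂ) = 0)
      have hn' : (1:ℝ) ≤ n := by exact_mod_cast hn
      linarith) N w0 (by
      intro n hn
      obtain ⟨k, rfl⟩ : ∃ k, n = k + N + 1 := ⟨n - (N+1), by omega⟩
      have h := hu k
      simp only [w0, P, Q, R] at h ⊢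
      rw [show k + N + 1 + 1 - N = k + 2 by omega, show k + N + 1 - N = k + 1 by omega,
        show k + N + 1 - 1 - N = k by omega, show k + N + 1 - 1 = k + N by omega]
      have hkN : (1:ℝ) ≤ k + N := by exact_mod_cast (by omega : 1 ≤ k + N)
      have q0 : (((√((k + N : ℕ):ℝ) : ℝ)) : ℂ) ≠ 0 := by
        rw [Complex.ofReal_ne_zero]; push_cast; positivity
      have q1 : (((√((k + N + 1 : ℕ):ℝ) : ℝ)) : ℂ) ≠ 0 := by
        rw [Complex.ofReal_ne_zero]; positivity
      have q2 : (((√((k + N + 1 + 1: ℕ):ℝ) : ℝ)) : ℂ) ≠ 0 := by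
        rw [Complex.ofReal_ne_zero]; positivity
      have q1s : (((√((k + N + 1 : ℕ):ℝ) : ℝ)) : ℂ) ^ 2 = ((k + N + 1 : ℕ) : ℂ) := by
        rw [← Complex.ofReal_pow, Real.sq_sqrt (by positivity)]; simp
      rw [show ((k + N + 1 : ℕ):ℝ) + 1 = ((k + N + 1 + 1 : ℕ):ℝ) by push_cast; ring,
        show ((k + N + 1 : ℕ):ℝ) - 1 = ((k + N : ℕ):ℝ) by push_cast; ring] at h
      simp only [Complex.ofReal_div, Complex.ofReal_mul, Complex.ofReal_add, Complex.ofReal_sub,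
        Complex.ofReal_natCast, Complex.ofReal_one, Complex.ofReal_ofNat] at h
      have := ba_alg l (l ^ (k+N)) _ _ _ _ (s (k+N+1)) (u k) (u (k+1)) (u (k+2)) h0 q0 q1 q2 q1s h
      rw [hβ, pow_succ, pow_succ]
      exact this)
  refine ⟨C + ∑ n ∈ Finset.range N, n * ‖(Real.sqrt n : ℂ) * l ^ (-(n : ℤ)) * w n - 1‖, by positivity,
    w, hw2, ?_⟩
  intro n hn
  have hn' : (1:ℝ) ≤ n := by exact_mod_cast hn
  rw [le_div_iff₀ (by positivity), mul_comm]
  rcases lt_or_ge n N with h | h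
  · have := Finset.single_le_sum (f := fun n : ℕ => (n:ℝ) * ‖(Real.sqrt n : ℂ) * l ^ (-(n : ℤ)) * w n - 1‖)
      (fun i _ => by positivity) (Finset.mem_range.2 h)
    linarith
  · rw [hw1 n h]
    have q : ((√(n:ℝ) : ℝ) : ℂ) ≠ 0 := by rw [Complex.ofReal_ne_zero]; positivity
    have e : (Real.sqrt n : ℂ) * l ^ (-(n : ℤ)) * w0 n = u (n - N) := by
      simp only [w0]
      rw [zpow_neg, zpow_natCast]
      field_simp
    rw [e]
    have := hub (n - N)
    rw [Nat.cast_sub h, sub_add_cancel, le_div_iff₀ (by positivity)] at this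
    have h2 : 0 ≤ ∑ n ∈ Finset.range N, (n:ℝ) * ‖(Real.sqrt n : ℂ) * l ^ (-(n : ℤ)) * w n - 1‖ := by positivity
    linarith

/-- Instance (1.bap) of the Birkhoff–Adams theorem: for `α > 0`, `α ≠ 1` and
`Λ ∈ ℂ \ [0,∞)`, with `λ₊ = 1/α + √(1/α²-1)` and `λ₋ = 1/α - √(1/α²-1)`
(principal branch), the recurrence (1.eq) has, as `n → +∞`, two solutions
with asymptotics `w_n^± = λ_±^n n^{-1/2} (1 + O(n^{-1}))`. -/
theorem birkhoff_adams_plus (α : ℝ) (hα : 0 < α) (hα1 : α ≠ 1)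
    (Λ : ℂ) (hΛ : ∀ t : ℝ, 0 ≤ t → Λ ≠ (t : ℂ)) :
    ∃ C : ℝ, 0 < C ∧ ∃ wp wm : ℕ → ℂ,
      (∀ n : ℕ, 1 ≤ n →
        ((n : ℂ) + 1 / 2) * wp (n + 1)
          - (2 / (α : ℂ)) * (((n : ℂ) ^ 2 - Λ) ^ ((1 : ℂ) / 2)) * wp n
          + ((n : ℂ) - 1 / 2) * wp (n - 1) = 0) ∧
      (∀ n : ℕ, 1 ≤ n →
        ((n : ℂ) + 1 / 2) * wm (n + 1)
          - (2 / (α : ℂ)) * (((n : ℂ) ^ 2 - Λ) ^ ((1 : ℂ) / 2)) * wm n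
          + ((n : ℂ) - 1 / 2) * wm (n - 1) = 0) ∧
      (∀ n : ℕ, 1 ≤ n →
        ‖(Real.sqrt n : ℂ) * (1 / (α : ℂ) + ((1 / (α : ℂ) ^ 2 - 1) ^ ((1 : ℂ) / 2))) ^ (-(n : ℤ))
            * wp n - 1‖ ≤ C / n) ∧
      (∀ n : ℕ, 1 ≤ n →
        ‖(Real.sqrt n : ℂ) * (1 / (α : ℂ) - ((1 / (α : ℂ) ^ 2 - 1) ^ ((1 : ℂ) / 2))) ^ (-(n : ℤ))
            * wm n - 1‖ ≤ C / n) := by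
  set s : ℂ := (1 / (α : ℂ) ^ 2 - 1) ^ ((1 : ℂ) / 2) with hs
  have hαC : (α : ℂ) ≠ 0 := by exact_mod_cast hα.ne'
  have hs2 : s ^ 2 = 1 / (α : ℂ) ^ 2 - 1 := by
    have := Complex.cpow_nat_inv_pow (1 / (α : ℂ) ^ 2 - 1) (two_ne_zero)
    rw [hs]
    convert this using 3
    norm_num
  have hs0 : s ≠ 0 := by
    intro h
    rw [h] at hs2
    have h2 : (α : ℂ) ^ 2 = 1 := by
      field_simp at hs2
      linear_combination hs2
    have h3 : α ^ 2 = 1 := by exact_mod_cast h2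
    exact hα1 (by nlinarith)
  have hprod : (1 / (α : ℂ) + s) * (1 / (α : ℂ) - s) = 1 := by
    linear_combination -hs2
  have hp0 : 1 / (α : ℂ) + s ≠ 0 := left_ne_zero_of_mul_eq_one hprod
  have hm0 : 1 / (α : ℂ) - s ≠ 0 := right_ne_zero_of_mul_eq_one hprod
  have hpi : (1 / (α : ℂ) + s)⁻¹ = 1 / (α : ℂ) - s := inv_eq_of_mul_eq_one_right hprod
  have hmi : (1 / (α : ℂ) - s)⁻¹ = 1 / (α : ℂ) + s := inv_eq_of_mul_eq_one_left hprod
  obtain ⟨C1, hC1, wp, hp1, hp2⟩ := ba_one (2 / (α : ℂ)) (1 / (α : ℂ) + s) hp0 (by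
    intro h
    have : (1 / (α : ℂ) + s) * (2 * s) = 0 := by linear_combination h - hprod
    exact mul_ne_zero hp0 (mul_ne_zero two_ne_zero hs0) this) (by rw [hpi]; ring) Λ
  obtain ⟨C2, hC2, wm, hm1, hm2⟩ := ba_one (2 / (α : ℂ)) (1 / (α : ℂ) - s) hm0 (by
    intro h
    have : (1 / (α : ℂ) - s) * (2 * s) = 0 := by linear_combination hprod - h
    exact mul_ne_zero hm0 (mul_ne_zero two_ne_zero hs0) this) (by rw [hmi]; ring) Λ
  refine ⟨C1 + C2, by positivity, wp, wm, hp1, hm1, fun n hn => (hp2 n hn).trans ?_,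
    fun n hn => (hm2 n hn).trans ?_⟩
  · gcongr; linarith
  · gcongr; linarith
end

section
/- Let α > 1, Λ ∈ ℂ \ [0,∞), and ε > 0. Then there exist constants C, C′ > 0 with the following property. Let w : ℤ → ℂ satisfy ∑_{n∈ℤ} (1+n²)^{−1/2} |w_n|² < ∞, and define f_n := 2√(n²−Λ)·w_n − α·( (n+1/2)·w_{n+1} + (n−1/2)·w_{n−1} ) for n ∈ ℤ. If ∑_{n∈ℤ} (1+n²)^{1/2} |f_n|² < ∞, then ∑_{n∈ℤ} (1+n²)^{−ε} |w_n|² < ∞ and ( ∑_{n∈ℤ} (1+n²)^{−ε} |w_n|² )^{1/2} ≤ C ( ∑_{n∈ℤ} (1+n²)^{1/2} |f_n|² )^{1/2} + C′ ( ∑_{n∈ℤ} (1+n²)^{−1/2} |w_n|² )^{1/2}. -/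
open Complex

/-- Discrete Gronwall inequality. -/
lemma aux_gronwall (S a b : ℕ → ℝ) (ha : ∀ n, 0 ≤ a n) (hb : ∀ n, 0 ≤ b n) (h0 : 0 ≤ S 0)
    (h : ∀ n, S (n + 1) ≤ (1 + a n) * S n + b n) (n : ℕ) :
    S n ≤ Real.exp (∑ i ∈ Finset.range n, a i) * (S 0 + ∑ i ∈ Finset.range n, b i) := by
  induction n with
  | zero => simp
  | succ n ih =>
    rw [Finset.sum_range_succ, Finset.sum_range_succ, Real.exp_add]
    have hA : 0 ≤ ∑ i ∈ Finset.range n, a i := Finset.sum_nonneg fun i _ => ha i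
    have hB : 0 ≤ ∑ i ∈ Finset.range n, b i := Finset.sum_nonneg fun i _ => hb i
    set E := Real.exp (∑ i ∈ Finset.range n, a i) with hE
    have hE1 : 1 ≤ E := Real.one_le_exp hA
    set T := ∑ i ∈ Finset.range n, b i
    have h1 : 1 + a n ≤ Real.exp (a n) := by linarith [Real.add_one_le_exp (a n)]
    have h2 : (1 + a n) * S n ≤ Real.exp (a n) * (E * (S 0 + T)) := by
      calc (1 + a n) * S n ≤ (1 + a n) * (E * (S 0 + T)) :=
            mul_le_mul_of_nonneg_left ih (by linarith [ha n])
        _ ≤ _ := mul_le_mul_of_nonneg_right h1 (by positivity)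
    have h3 : b n ≤ E * Real.exp (a n) * b n := by
      have : 1 ≤ E * Real.exp (a n) := one_le_mul_of_one_le_of_one_le hE1 (Real.one_le_exp (ha n))
      nlinarith [hb n]
    calc S (n + 1) ≤ _ := h n
      _ ≤ Real.exp (a n) * (E * (S 0 + T)) + E * Real.exp (a n) * b n := by linarith
      _ = _ := by ring

/-- Perturbed constant-coefficient recurrence with oscillating solutions. -/
lemma aux_osc (c : ℝ) (hc : |c| < 1) (A : ℝ) : ∃ K : ℝ, 0 ≤ K ∧
    ∀ (v : ℕ → ℂ) (a b : ℕ → ℝ) (B : ℝ), (∀ n, 0 ≤ a n) → (∀ n, 0 ≤ b n) →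
      (∀ n, ∑ i ∈ Finset.range n, a i ≤ A) → (∀ n, ∑ i ∈ Finset.range n, b i ≤ B) →
      (∀ n, ‖v (n + 2) + v n - 2 * (c : ℂ) * v (n + 1)‖ ≤ a n * (‖v (n + 1)‖ + ‖v n‖) + b n) →
      ∀ n, ‖v n‖ ≤ K * (‖v 0‖ + ‖v 1‖ + B) := by
  have hc2 : 0 < 1 - c ^ 2 := by
    have := (sq_lt_one_iff_abs_lt_one c).2 hc
    linarith
  set d : ℝ := Real.sqrt (1 - c ^ 2) with hd
  have hdpos : 0 < d := Real.sqrt_pos.2 hc2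
  have hd2 : d ^ 2 = 1 - c ^ 2 := Real.sq_sqrt hc2.le
  have hd2' : (d : ℂ) ^ 2 = 1 - (c : ℂ) ^ 2 := by exact_mod_cast hd2
  set z : ℂ := c + d * I with hz
  set y : ℂ := c - d * I with hy
  have hzy : z * y = 1 := by
    have : z * y = (c : ℂ) ^ 2 + (d : ℂ) ^ 2 := by
      rw [hz, hy]; ring_nf; rw [I_sq]; ring
    rw [this, hd2']; ring
  have hsum : z + y = 2 * c := by rw [hz, hy]; ring
  have nz : ‖z‖ = 1 := by
    have : ‖z‖ ^ 2 = 1 := by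
      rw [← Complex.normSq_eq_norm_sq, hz, Complex.normSq_add_mul_I]; linarith
    nlinarith [norm_nonneg z]
  have ny : ‖y‖ = 1 := by
    have := congrArg norm hzy
    rw [norm_mul, nz] at this
    simpa using this
  have hdiff : ‖z - y‖ = 2 * d := by
    have : z - y = ((2 * d : ℝ) : ℂ) * I := by rw [hz, hy]; push_cast; ring
    rw [this, norm_mul, Complex.norm_I, Complex.norm_real, Real.norm_of_nonneg (by positivity)]
    ring
  refine ⟨Real.exp (2 / d * A) / d, by positivity, ?_⟩
  intro v a b B ha hb hA hB hv n
  set S : ℕ → ℝ := fun n => ‖v (n + 1) - z * v n‖ + ‖v (n + 1) - y * v n‖ with hS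
  have hv0 : ∀ n, ‖v n‖ * (2 * d) ≤ S n := by
    intro n
    rw [← hdiff, ← norm_mul]
    have : v n * (z - y) = (v (n + 1) - y * v n) - (v (n + 1) - z * v n) := by ring
    rw [this]
    refine (norm_sub_le _ _).trans ?_
    simp only [hS]; linarith
  have hv1 : ∀ n, ‖v (n + 1)‖ * (2 * d) ≤ S n := by
    intro n
    rw [← hdiff, ← norm_mul]
    have : v (n + 1) * (z - y) = z * (v (n + 1) - y * v n) - y * (v (n + 1) - z * v n) := by ring
    rw [this]
    refine (norm_sub_le _ _).trans ?_
    rw [norm_mul, norm_mul, nz, ny]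
    simp only [hS]; linarith
  have hstep : ∀ n, S (n + 1) ≤ (1 + 2 / d * a n) * S n + 2 * b n := by
    intro n
    have e1 : ‖v (n + 2) - z * v (n + 1)‖ ≤ ‖v (n + 1) - z * v n‖
        + ‖v (n + 2) + v n - 2 * (c : ℂ) * v (n + 1)‖ := by
      have : v (n + 2) - z * v (n + 1) = y * (v (n + 1) - z * v n)
        + (v (n + 2) + v n - 2 * (c : ℂ) * v (n + 1)) := by
        rw [← hsum]; linear_combination (v n) * hzy
      rw [this]
      refine (norm_add_le _ _).trans ?_
      rw [norm_mul, ny, one_mul]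
    have e2 : ‖v (n + 2) - y * v (n + 1)‖ ≤ ‖v (n + 1) - y * v n‖
        + ‖v (n + 2) + v n - 2 * (c : ℂ) * v (n + 1)‖ := by
      have : v (n + 2) - y * v (n + 1) = z * (v (n + 1) - y * v n)
        + (v (n + 2) + v n - 2 * (c : ℂ) * v (n + 1)) := by
        rw [← hsum]; linear_combination (v n) * hzy
      rw [this]
      refine (norm_add_le _ _).trans ?_
      rw [norm_mul, nz, one_mul]
    have e3 : ‖v (n + 1)‖ + ‖v n‖ ≤ S n / d := by
      rw [le_div_iff₀ hdpos]; linarith [hv0 n, hv1 n]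
    have e4 := mul_le_mul_of_nonneg_left e3 (ha n)
    have e5 : 2 / d * a n * S n = 2 * (a n * (S n / d)) := by ring
    have e6 : S (n + 1) = ‖v (n + 2) - z * v (n + 1)‖ + ‖v (n + 2) - y * v (n + 1)‖ := rfl
    have e7 : S n = ‖v (n + 1) - z * v n‖ + ‖v (n + 1) - y * v n‖ := rfl
    have := hv n
    rw [add_mul, e5]
    linarith
  have hS0 : S 0 ≤ 2 * (‖v 0‖ + ‖v 1‖) := by
    have e1 := norm_sub_le (v 1) (z * v 0)
    have e2 := norm_sub_le (v 1) (y * v 0)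
    rw [norm_mul, nz] at e1
    rw [norm_mul, ny] at e2
    have e7 : S 0 = ‖v 1 - z * v 0‖ + ‖v 1 - y * v 0‖ := rfl
    linarith
  have hS0' : 0 ≤ S 0 := by simp only [hS]; positivity
  have hG := aux_gronwall S (fun n => 2 / d * a n) (fun n => 2 * b n)
    (fun n => mul_nonneg (by positivity) (ha n)) (fun n => by linarith [hb n]) hS0' hstep n
  rw [← Finset.mul_sum, ← Finset.mul_sum] at hG
  have hB0 : 0 ≤ ∑ i ∈ Finset.range n, b i := Finset.sum_nonneg fun i _ => hb i
  have hfin : S n ≤ Real.exp (2 / d * A) * (2 * (‖v 0‖ + ‖v 1‖ + B)) := by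
    refine hG.trans ?_
    refine mul_le_mul ?_ ?_ (by positivity) (by positivity)
    · exact Real.exp_le_exp.2 (mul_le_mul_of_nonneg_left (hA n) (by positivity))
    · linarith [hB n]
  have h1 := (hv0 n).trans hfin
  rw [div_mul_eq_mul_div, le_div_iff₀ hdpos]
  linarith

set_option maxHeartbeats 2000000 in
/-- One step of the recurrence, after the rescaling `v = √x u`. -/
lemma aux_step (α : ℝ) (hα : 1 < |α|) (Λ s um u0 up f : ℂ) (x : ℝ) (hx : 2 ≤ x)
    (hs : 0 ≤ s.re) (hs2 : s ^ 2 = (x : ℂ) ^ 2 - Λ)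
    (hf : f = 2 * s * u0 - (α : ℂ) * (((x : ℂ) + 1 / 2) * up + ((x : ℂ) - 1 / 2) * um)) :
    ‖(Real.sqrt (x + 1) : ℂ) * up + (Real.sqrt (x - 1) : ℂ) * um
        - 2 * ((α⁻¹ : ℝ) : ℂ) * ((Real.sqrt x : ℂ) * u0)‖
      ≤ (2 * ‖Λ‖ + 1) / x ^ 2 * (‖(Real.sqrt x : ℂ) * u0‖ + ‖(Real.sqrt (x - 1) : ℂ) * um‖)
        + ‖f‖ / Real.sqrt x := by
  have hx0 : 0 < x := by linarith
  set r := Real.sqrt x with hr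
  set rp := Real.sqrt (x + 1) with hrp
  set rm := Real.sqrt (x - 1) with hrm
  have r0 : 0 < r := Real.sqrt_pos.2 hx0
  have rp0 : 0 < rp := Real.sqrt_pos.2 (by linarith)
  have rm0 : 0 < rm := Real.sqrt_pos.2 (by linarith)
  have r2 : r ^ 2 = x := Real.sq_sqrt hx0.le
  have rp2 : rp ^ 2 = x + 1 := Real.sq_sqrt (by linarith)
  have rm2 : rm ^ 2 = x - 1 := Real.sq_sqrt (by linarith)
  have hα0 : α ≠ 0 := by rintro rfl; simp at hα; linarith
  set p := (x + 1 / 2) / (r * rp) with hp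
  set p' := (x - 1 / 2) / (r * rm) with hp'
  have p0 : 0 < p := by positivity
  have p'0 : 0 < p' := div_pos (by linarith) (by positivity)
  have psq : p ^ 2 = 1 + 1 / (4 * (x * (x + 1))) := by
    rw [hp, div_pow, mul_pow, r2, rp2]; field_simp; ring
  have hxm : x - 1 ≠ 0 := by linarith
  have p'sq : p' ^ 2 = 1 + 1 / (4 * (x * (x - 1))) := by
    rw [hp', div_pow, mul_pow, r2, rm2]; field_simp; ring
  have b1 : 1 / (4 * (x * (x + 1))) ≤ 1 / (2 * x ^ 2) := by
    apply one_div_le_one_div_of_le <;> nlinarith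
  have b2 : 1 / (4 * (x * (x - 1))) ≤ 1 / (2 * x ^ 2) := by
    apply one_div_le_one_div_of_le <;> nlinarith
  have b1' : 0 < 1 / (4 * (x * (x + 1))) := by positivity
  have b2' : 0 < 1 / (4 * (x * (x - 1))) := by
    have : 0 < x - 1 := by linarith
    positivity
  have p1 : 1 ≤ p := by nlinarith
  have p'1 : 1 ≤ p' := by nlinarith
  have pu : p - 1 ≤ 1 / (2 * x ^ 2) := by nlinarith
  have p'u : p' - 1 ≤ 1 / (2 * x ^ 2) := by nlinarith
  have hpp : |p - p'| ≤ 1 / (2 * x ^ 2) := by rw [abs_le]; constructor <;> linarith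
  have hsx : ‖s - x‖ ≤ ‖Λ‖ / x := by
    have h1 : (s - x) * (s + x) = -Λ := by linear_combination hs2
    have h2 : ‖s - x‖ * ‖s + x‖ = ‖Λ‖ := by rw [← norm_mul, h1, norm_neg]
    have h3 : x ≤ ‖s + x‖ := by
      have := Complex.re_le_norm (s + x)
      simp at this
      linarith
    rw [le_div_iff₀ hx0]
    nlinarith [norm_nonneg (s - x)]
  have hq : ‖s / x - p‖ ≤ ‖Λ‖ / x ^ 2 + 1 / (2 * x ^ 2) := by
    have h1 : s / x - p = (s - x) / x - ((p - 1 : ℝ) : ℂ) := by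
      have : (x : ℂ) ≠ 0 := by exact_mod_cast hx0.ne'
      push_cast; field_simp; ring
    rw [h1]
    refine (norm_sub_le _ _).trans (add_le_add ?_ ?_)
    · rw [norm_div, Complex.norm_real, Real.norm_of_nonneg hx0.le, div_le_iff₀ hx0]
      refine hsx.trans (le_of_eq ?_)
      field_simp
    · rw [Complex.norm_real, Real.norm_of_nonneg (by linarith)]; exact pu
  have hcα : |α⁻¹| ≤ 1 := by rw [abs_inv]; exact inv_le_one_of_one_le₀ hα.le
  set e := (rp : ℂ) * up + (rm : ℂ) * um - 2 * ((α⁻¹ : ℝ) : ℂ) * ((r : ℂ) * u0) with he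
  have key : (p : ℂ) * e = ((p - p' : ℝ) : ℂ) * ((rm : ℂ) * um)
      + 2 * ((α⁻¹ : ℝ) : ℂ) * ((s / x - p) * ((r : ℂ) * u0)) - ((α⁻¹ : ℝ) : ℂ) * (f / r) := by
    have c1 : (r : ℂ) ≠ 0 := by exact_mod_cast r0.ne'
    have c2 : (rp : ℂ) ≠ 0 := by exact_mod_cast rp0.ne'
    have c3 : (rm : ℂ) ≠ 0 := by exact_mod_cast rm0.ne'
    have c4 : (α : ℂ) ≠ 0 := by exact_mod_cast hα0
    have c5 : (x : ℂ) = (r : ℂ) ^ 2 := by exact_mod_cast r2.symm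
    have k1 : (p : ℂ) * ((rp : ℂ) * up) = ((x : ℂ) + 1 / 2) * up / r := by
      rw [hp]; push_cast; field_simp
    have k2 : (p' : ℂ) * ((rm : ℂ) * um) = ((x : ℂ) - 1 / 2) * um / r := by
      rw [hp']; push_cast; field_simp
    have k3 : s / x * ((r : ℂ) * u0) = s * u0 / r := by
      rw [c5]; field_simp
    have k4 : ((α⁻¹ : ℝ) : ℂ) * (f / r) = 2 * ((α⁻¹ : ℝ) : ℂ) * (s * u0 / r)
       - ((x : ℂ) + 1 / 2) * up / r - ((x : ℂ) - 1 / 2) * um / r := by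
      rw [hf]; push_cast; field_simp; ring
    rw [he]
    rw [k4, sub_mul (s / x), k3]
    push_cast
    linear_combination k1 + k2
  have hpe : ‖e‖ ≤ ‖(p : ℂ) * e‖ := by
    rw [norm_mul, Complex.norm_real, Real.norm_of_nonneg p0.le]
    nlinarith [norm_nonneg e]
  refine hpe.trans ?_
  rw [key]
  set U := (r : ℂ) * u0
  set V := (rm : ℂ) * um
  have n1 : ‖((p - p' : ℝ) : ℂ) * V‖ ≤ 1 / (2 * x ^ 2) * ‖V‖ := by
    rw [norm_mul, Complex.norm_real]
    exact mul_le_mul_of_nonneg_right hpp (norm_nonneg _)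
  have n2 : ‖2 * ((α⁻¹ : ℝ) : ℂ) * ((s / x - p) * U)‖
      ≤ 2 * ((‖Λ‖ / x ^ 2 + 1 / (2 * x ^ 2)) * ‖U‖) := by
    rw [norm_mul, norm_mul, norm_mul, Complex.norm_real, Complex.norm_two]
    have h1 := mul_le_mul_of_nonneg_right hq (norm_nonneg U)
    have h2 : 0 ≤ ‖s / x - p‖ * ‖U‖ := by positivity
    have h3 : ‖α⁻¹‖ ≤ 1 := hcα
    nlinarith
  have n3 : ‖((α⁻¹ : ℝ) : ℂ) * (f / r)‖ ≤ ‖f‖ / r := by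
    rw [norm_mul, norm_div, Complex.norm_real, Complex.norm_real, Real.norm_of_nonneg r0.le]
    have h2 : 0 ≤ ‖f‖ / r := by positivity
    have h3 : ‖α⁻¹‖ ≤ 1 := hcα
    nlinarith
  have n4 : 1 / (2 * x ^ 2) * ‖V‖ ≤ (2 * ‖Λ‖ + 1) / x ^ 2 * ‖V‖ := by
    refine mul_le_mul_of_nonneg_right ?_ (norm_nonneg _)
    rw [div_le_div_iff₀ (by positivity) (by positivity)]
    nlinarith [norm_nonneg Λ, sq_nonneg x, mul_nonneg (norm_nonneg Λ) (sq_nonneg x)]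
  have n5 : 2 * ((‖Λ‖ / x ^ 2 + 1 / (2 * x ^ 2)) * ‖U‖) = (2 * ‖Λ‖ + 1) / x ^ 2 * ‖U‖ := by
    field_simp
  refine (norm_sub_le _ _).trans ?_
  have := norm_add_le (((p - p' : ℝ) : ℂ) * V) (2 * ((α⁻¹ : ℝ) : ℂ) * ((s / x - p) * U))
  rw [mul_add]
  linarith

lemma aux_inv_sq (n : ℕ) : ∑ i ∈ Finset.range n, 1 / ((i : ℝ) + 2) ^ 2 ≤ 1 := by
  have : ∑ i ∈ Finset.range n, 1 / ((i : ℝ) + 2) ^ 2 ≤ 1 - 1 / ((n : ℝ) + 1) := by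
    induction n with
    | zero => simp
    | succ n ih =>
      rw [Finset.sum_range_succ]
      have h : 1 / ((n : ℝ) + 2) ^ 2 ≤ 1 / ((n : ℝ) + 1) - 1 / ((n : ℝ) + 2) := by
        have : 1 / ((n : ℝ) + 1) - 1 / ((n : ℝ) + 2) = 1 / (((n : ℝ) + 1) * ((n : ℝ) + 2)) := by
          field_simp; ring
        rw [this]
        apply one_div_le_one_div_of_le (by positivity)
        nlinarith [(Nat.cast_nonneg n : (0 : ℝ) ≤ n)]
      push_cast
      have e : (n : ℝ) + 1 + 1 = n + 2 := by ring
      rw [e]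
      linarith
  have h2 : (0 : ℝ) ≤ 1 / ((n : ℝ) + 1) := by positivity
  linarith

/-- Half-line estimate. -/
lemma aux_half_s9 (α : ℝ) (hα : 1 < |α|) (Λ : ℂ) : ∃ K : ℝ, 0 ≤ K ∧
    ∀ (u f s : ℕ → ℂ) (F : ℝ), 0 ≤ F → (∀ k, 0 ≤ (s k).re) →
      (∀ k : ℕ, s k ^ 2 = ((k : ℂ) + 2) ^ 2 - Λ) →
      (∀ k : ℕ, f k = 2 * s k * u (k + 1) - (α : ℂ) * (((k : ℂ) + 2 + 1 / 2) * u (k + 2)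
        + ((k : ℂ) + 2 - 1 / 2) * u k)) →
      (∀ n, ∑ k ∈ Finset.range n, ((k : ℝ) + 2) * ‖f k‖ ^ 2 ≤ F ^ 2) →
      ∀ k : ℕ, Real.sqrt ((k : ℝ) + 1) * ‖u k‖ ≤ K * (‖u 0‖ + ‖u 1‖ + F) := by
  have hc : |α⁻¹| < 1 := by rw [abs_inv]; exact inv_lt_one_of_one_lt₀ hα
  obtain ⟨K, hK, H⟩ := aux_osc α⁻¹ hc (2 * ‖Λ‖ + 1)
  refine ⟨2 * K, by positivity, ?_⟩
  intro u f s F hF hs hs2 hf hFs k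
  have := H (fun k => (Real.sqrt ((k : ℝ) + 1) : ℂ) * u k)
    (fun k => (2 * ‖Λ‖ + 1) / ((k : ℝ) + 2) ^ 2) (fun k => ‖f k‖ / Real.sqrt ((k : ℝ) + 2)) F
    (fun k => by positivity) (fun k => by positivity) ?_ ?_ ?_ k
  · simp only [norm_mul, Complex.norm_real, Real.norm_of_nonneg (Real.sqrt_nonneg _)] at this
    refine this.trans ?_
    have h0 : Real.sqrt (((0 : ℕ) : ℝ) + 1) = 1 := by simp
    have h1 : Real.sqrt (((1 : ℕ) : ℝ) + 1) ≤ 2 := by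
      rw [Real.sqrt_le_left (by norm_num)]; norm_num
    rw [h0, mul_comm 2 K, mul_assoc K]
    refine mul_le_mul_of_nonneg_left ?_ hK
    nlinarith [norm_nonneg (u 0), norm_nonneg (u 1)]
  · intro n
    have : ∀ i : ℕ, (2 * ‖Λ‖ + 1) / ((i : ℝ) + 2) ^ 2 = (2 * ‖Λ‖ + 1) * (1 / ((i : ℝ) + 2) ^ 2) :=
      fun i => by ring
    simp only [this]
    rw [← Finset.mul_sum]
    nlinarith [aux_inv_sq n, norm_nonneg Λ]
  · intro n
    have cs := Finset.sum_mul_sq_le_sq_mul_sq (Finset.range n)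
      (fun k : ℕ => Real.sqrt ((k : ℝ) + 2) * ‖f k‖) (fun k : ℕ => 1 / ((k : ℝ) + 2))
    have e1 : ∀ k : ℕ, Real.sqrt ((k : ℝ) + 2) * ‖f k‖ * (1 / ((k : ℝ) + 2))
        = ‖f k‖ / Real.sqrt ((k : ℝ) + 2) := by
      intro k
      have h2 : Real.sqrt ((k : ℝ) + 2) ^ 2 = k + 2 := Real.sq_sqrt (by positivity)
      have h3 : 0 < Real.sqrt ((k : ℝ) + 2) := Real.sqrt_pos.2 (by positivity)
      rw [← h2]
      field_simp
      rw [Real.sqrt_sq h3.le]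
    have e2 : ∀ k : ℕ, (Real.sqrt ((k : ℝ) + 2) * ‖f k‖) ^ 2 = ((k : ℝ) + 2) * ‖f k‖ ^ 2 := by
      intro k
      rw [mul_pow, Real.sq_sqrt (by positivity)]
    have e3 : ∀ k : ℕ, (1 / ((k : ℝ) + 2)) ^ 2 = 1 / ((k : ℝ) + 2) ^ 2 := fun k => by
      rw [div_pow, one_pow]
    simp only [e1, e2, e3] at cs
    refine abs_le_of_sq_le_sq' ?_ hF |>.2
    refine cs.trans ?_
    have h5 : 0 ≤ ∑ k ∈ Finset.range n, ((k : ℝ) + 2) * ‖f k‖ ^ 2 :=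
      Finset.sum_nonneg fun k _ => by positivity
    nlinarith [hFs n, aux_inv_sq n]
  · intro k
    have h := aux_step α hα Λ (s k) (u k) (u (k + 1)) (u (k + 2)) (f k) ((k : ℝ) + 2)
      (by linarith [(Nat.cast_nonneg k : (0 : ℝ) ≤ k)]) (hs k) (by rw [hs2]; push_cast; ring)
      (by rw [hf]; push_cast; ring)
    have g1 : (k : ℝ) + 2 + 1 = ((k + 2 : ℕ) : ℝ) + 1 := by push_cast; ring
    have g2 : (k : ℝ) + 2 - 1 = (k : ℝ) + 1 := by ring
    have g3 : ((k + 1 : ℕ) : ℝ) + 1 = (k : ℝ) + 2 := by push_cast; ring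
    rw [g1, g2] at h
    simp only [g3]
    exact h

lemma aux_sqrt (z : ℂ) : (z ^ ((1 : ℂ) / 2)) ^ 2 = z ∧ 0 ≤ (z ^ ((1 : ℂ) / 2)).re := by
  rw [one_div]
  refine ⟨by simp, ?_⟩
  rw [Complex.cpow_inv_two_re]
  positivity

lemma aux_sum_inj (G : ℤ → ℝ) (hG : ∀ n, 0 ≤ G n) (hs : Summable G) (i : ℕ → ℤ)
    (hi : Function.Injective i) (n : ℕ) : ∑ k ∈ Finset.range n, G (i k) ≤ ∑' m, G m := by
  rw [← Finset.sum_image (f := G) (s := Finset.range n) (g := i) (fun a _ b _ h => hi h)]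
  exact hs.sum_le_tsum _ (fun m _ => hG m)

lemma aux_summable (s : ℝ) (hs : 1 / 2 < s) :
    Summable fun n : ℤ => (1 + (n : ℝ) ^ 2) ^ (-s) := by
  refine Summable.of_norm_bounded_eventually
    (Real.summable_abs_int_rpow (b := 2 * s) (by linarith)) ?_
  have : ∀ᶠ n : ℤ in Filter.cofinite, n ≠ 0 := by
    rw [Filter.eventually_cofinite]; simp
  filter_upwards [this] with n hn
  have hn' : 0 < |(n : ℝ)| := abs_pos.2 (by exact_mod_cast hn)
  rw [Real.norm_of_nonneg (by positivity)]
  have e : |(n : ℝ)| ^ (-(2 * s)) = ((n : ℝ) ^ 2) ^ (-s) := by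
    rw [← sq_abs, ← Real.rpow_natCast, ← Real.rpow_mul hn'.le]
    congr 1; push_cast; ring
  rw [e]
  exact Real.rpow_le_rpow_of_nonpos (by rw [← sq_abs]; positivity) (by linarith) (by linarith)

/-- Lemma 6.1 in Fourier coefficients: for `α > 1`, `Λ ∈ ℂ \ [0,∞)` and `ε > 0`
there are constants `C, C' > 0` such that for every `w ∈ H^{-1/2}` with
`f_n = 2√(n²-Λ) w_n - α((n+1/2)w_{n+1} + (n-1/2)w_{n-1})` in `H^{1/2}` one has
`w ∈ H^{-ε}` and `‖w‖_{H^{-ε}} ≤ C ‖f‖_{H^{1/2}} + C' ‖w‖_{H^{-1/2}}`. -/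
theorem apriori_estimate (α : ℝ) (hα : 1 < α)
    (Λ : ℂ) (hΛ : ∀ t : ℝ, 0 ≤ t → Λ ≠ (t : ℂ)) (ε : ℝ) (hε : 0 < ε) :
    ∃ C C' : ℝ, 0 < C ∧ 0 < C' ∧
      ∀ w f : ℤ → ℂ,
        (∀ n : ℤ, f n = 2 * (((n : ℂ) ^ 2 - Λ) ^ ((1 : ℂ) / 2)) * w n
            - (α : ℂ) * (((n : ℂ) + 1 / 2) * w (n + 1) + ((n : ℂ) - 1 / 2) * w (n - 1))) →
        (Summable fun n : ℤ => (1 + (n : ℝ) ^ 2) ^ (-(1 / 2 : ℝ)) * ‖w n‖ ^ 2) →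
        (Summable fun n : ℤ => (1 + (n : ℝ) ^ 2) ^ ((1 / 2 : ℝ)) * ‖f n‖ ^ 2) →
        (Summable fun n : ℤ => (1 + (n : ℝ) ^ 2) ^ (-ε) * ‖w n‖ ^ 2) ∧
          Real.sqrt (∑' n : ℤ, (1 + (n : ℝ) ^ 2) ^ (-ε) * ‖w n‖ ^ 2)
            ≤ C * Real.sqrt (∑' n : ℤ, (1 + (n : ℝ) ^ 2) ^ ((1 / 2 : ℝ)) * ‖f n‖ ^ 2)
              + C' * Real.sqrt (∑' n : ℤ, (1 + (n : ℝ) ^ 2) ^ (-(1 / 2 : ℝ)) * ‖w n‖ ^ 2) := by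
  obtain ⟨K₁, hK₁, H₁⟩ := aux_half_s9 α (by rw [abs_of_pos (by linarith)]; exact hα) Λ
  obtain ⟨K₂, hK₂, H₂⟩ := aux_half_s9 (-α) (by rw [abs_neg, abs_of_pos (by linarith)]; exact hα) Λ
  have hZs := aux_summable (1 / 2 + ε) (by linarith)
  set Z : ℝ := ∑' n : ℤ, (1 + (n : ℝ) ^ 2) ^ (-(1 / 2 + ε)) with hZ
  have hZ0 : 0 ≤ Z := tsum_nonneg fun n => by positivity
  set K : ℝ := K₁ + K₂ + 1 with hK
  have hK0 : 0 < K := by positivity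
  set C : ℝ := Real.sqrt (2 * Z) * K + 1 with hC
  have hC0 : 0 < C := by positivity
  refine ⟨C, 10 * C, hC0, by positivity, ?_⟩
  intro w f hf hw hfs
  set F := Real.sqrt (∑' n : ℤ, (1 + (n : ℝ) ^ 2) ^ ((1 / 2 : ℝ)) * ‖f n‖ ^ 2) with hF
  set W := Real.sqrt (∑' n : ℤ, (1 + (n : ℝ) ^ 2) ^ (-(1 / 2 : ℝ)) * ‖w n‖ ^ 2) with hW
  have hF0 : 0 ≤ F := Real.sqrt_nonneg _
  have hW0 : 0 ≤ W := Real.sqrt_nonneg _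
  have hF2 : F ^ 2 = ∑' n : ℤ, (1 + (n : ℝ) ^ 2) ^ ((1 / 2 : ℝ)) * ‖f n‖ ^ 2 :=
    Real.sq_sqrt (tsum_nonneg fun n => by positivity)
  have hW2 : W ^ 2 = ∑' n : ℤ, (1 + (n : ℝ) ^ 2) ^ (-(1 / 2 : ℝ)) * ‖w n‖ ^ 2 :=
    Real.sq_sqrt (tsum_nonneg fun n => by positivity)
  have hwj : ∀ j : ℤ, (j : ℝ) ^ 2 ≤ 4 → ‖w j‖ ≤ 2 * W := by
    intro j hj
    have h1 := hw.le_tsum j (fun n _ => by positivity)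
    rw [← hW2] at h1
    have h2 : (16 : ℝ) ^ (-(1 / 2 : ℝ)) ≤ (1 + (j : ℝ) ^ 2) ^ (-(1 / 2 : ℝ)) :=
      Real.rpow_le_rpow_of_nonpos (by positivity) (by linarith) (by norm_num)
    have h3 : (16 : ℝ) ^ (-(1 / 2 : ℝ)) = 1 / 4 := by
      rw [Real.rpow_neg (by norm_num), ← Real.sqrt_eq_rpow,
        show (16 : ℝ) = 4 ^ 2 by norm_num, Real.sqrt_sq (by norm_num)]
      norm_num
    rw [h3] at h2
    have h4 := mul_le_mul_of_nonneg_right h2 (sq_nonneg ‖w j‖)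
    refine (abs_le_of_sq_le_sq' ?_ (by positivity)).2
    nlinarith
  set M : ℝ := F + 10 * W with hM
  have hM0 : 0 ≤ M := by positivity
  have hcomp : ∀ (i : ℕ → ℤ), Function.Injective i → (∀ k, ((i k : ℤ) : ℝ) ^ 2 = ((k : ℝ) + 2) ^ 2) →
      ∀ n, ∑ k ∈ Finset.range n, ((k : ℝ) + 2) * ‖f (i k)‖ ^ 2 ≤ F ^ 2 := by
    intro i hi hik n
    rw [hF2]
    refine le_trans (Finset.sum_le_sum fun k _ => ?_)
      (aux_sum_inj _ (fun n => by positivity) hfs i hi n)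
    refine mul_le_mul_of_nonneg_right ?_ (sq_nonneg _)
    rw [hik, ← Real.sqrt_eq_rpow]
    exact Real.le_sqrt_of_sq_le (by linarith)
  have hpos : ∀ k : ℕ, Real.sqrt ((k : ℝ) + 1) * ‖w ((k : ℤ) + 1)‖ ≤ K * M := by
    intro k
    have h := H₁ (fun k => w ((k : ℤ) + 1)) (fun k => f ((k : ℤ) + 2))
      (fun k => (((k : ℂ) + 2) ^ 2 - Λ) ^ ((1 : ℂ) / 2)) F hF0 (fun k => (aux_sqrt _).2)
      (fun k => (aux_sqrt _).1) ?_ ?_ k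
    · refine h.trans ?_
      have a0 := hwj (((0 : ℕ) : ℤ) + 1) (by norm_num)
      have a1 := hwj (((1 : ℕ) : ℤ) + 1) (by norm_num)
      refine mul_le_mul (by linarith) (by linarith) (by positivity) (by positivity)
    · intro k
      have e1 : ((k + 1 : ℕ) : ℤ) + 1 = (k : ℤ) + 2 := by push_cast; ring
      have e2 : ((k + 2 : ℕ) : ℤ) + 1 = (k : ℤ) + 2 + 1 := by push_cast; ring
      have e3 : (k : ℤ) + 2 - 1 = (k : ℤ) + 1 := by ring
      have := hf ((k : ℤ) + 2)
      rw [e3] at this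
      simp only [e1, e2]
      rw [this]; push_cast; ring
    · exact hcomp (fun k => (k : ℤ) + 2) (fun a b h => by simpa using h) (fun k => by push_cast; ring)
  have hneg : ∀ k : ℕ, Real.sqrt ((k : ℝ) + 1) * ‖w (-((k : ℤ) + 1))‖ ≤ K * M := by
    intro k
    have h := H₂ (fun k => w (-((k : ℤ) + 1))) (fun k => f (-((k : ℤ) + 2)))
      (fun k => (((k : ℂ) + 2) ^ 2 - Λ) ^ ((1 : ℂ) / 2)) F hF0 (fun k => (aux_sqrt _).2)
      (fun k => (aux_sqrt _).1) ?_ ?_ k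
    · refine h.trans ?_
      have a0 := hwj (-(((0 : ℕ) : ℤ) + 1)) (by norm_num)
      have a1 := hwj (-(((1 : ℕ) : ℤ) + 1)) (by norm_num)
      refine mul_le_mul (by linarith) (by linarith) (by positivity) (by positivity)
    · intro k
      have e1 : -(((k + 1 : ℕ) : ℤ) + 1) = -((k : ℤ) + 2) := by push_cast; ring
      have e2 : -(((k + 2 : ℕ) : ℤ) + 1) = -((k : ℤ) + 2) - 1 := by push_cast; ring
      have e3 : -((k : ℤ) + 2) + 1 = -((k : ℤ) + 1) := by ring
      have := hf (-((k : ℤ) + 2))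
      rw [e3] at this
      have e4 : (((-((k : ℤ) + 2) : ℤ)) : ℂ) ^ 2 = ((k : ℂ) + 2) ^ 2 := by push_cast; ring
      rw [e4] at this
      simp only [e1, e2]
      rw [this]; push_cast; ring
    · exact hcomp (fun k => -((k : ℤ) + 2)) (fun a b h => by simpa using h)
        (fun k => by push_cast; ring)
  have habs : ∀ n : ℤ, n ≠ 0 → |(n : ℝ)| * ‖w n‖ ^ 2 ≤ (K * M) ^ 2 := by
    intro n hn
    have key : ∀ (k : ℕ) (m : ℤ), |(m : ℝ)| = (k : ℝ) + 1 →
        Real.sqrt ((k : ℝ) + 1) * ‖w m‖ ≤ K * M → |(m : ℝ)| * ‖w m‖ ^ 2 ≤ (K * M) ^ 2 := by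
      intro k m hm h
      have := pow_le_pow_left₀ (by positivity) h 2
      rwa [mul_pow, Real.sq_sqrt (by positivity), ← hm] at this
    rcases lt_or_gt_of_ne hn with h | h
    · obtain ⟨k, rfl⟩ : ∃ k : ℕ, n = -((k : ℤ) + 1) := ⟨(-n - 1).toNat, by omega⟩
      refine key k _ ?_ (hneg k)
      push_cast
      rw [abs_neg, abs_of_nonneg (by positivity)]
    · obtain ⟨k, rfl⟩ : ∃ k : ℕ, n = (k : ℤ) + 1 := ⟨(n - 1).toNat, by omega⟩
      refine key k _ ?_ (hpos k)
      push_cast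
      rw [abs_of_nonneg (by positivity)]
  have hbd : ∀ n : ℤ, Real.sqrt (1 + (n : ℝ) ^ 2) * ‖w n‖ ^ 2 ≤ 2 * (K * M) ^ 2 := by
    intro n
    by_cases hn : n = 0
    · subst hn
      have a0 := hwj 0 (by norm_num)
      have a1 : ‖w 0‖ ≤ K * M := by nlinarith [norm_nonneg (w 0)]
      have := pow_le_pow_left₀ (norm_nonneg _) a1 2
      have h0 : Real.sqrt (1 + ((0 : ℤ) : ℝ) ^ 2) = 1 := by simp
      rw [h0]
      nlinarith [sq_nonneg (K * M)]
    · have h1 : (1 : ℝ) ≤ |(n : ℝ)| := by exact_mod_cast Int.one_le_abs hn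
      have h2 : Real.sqrt (1 + (n : ℝ) ^ 2) ≤ 2 * |(n : ℝ)| := by
        rw [Real.sqrt_le_left (by positivity), mul_pow]
        have := sq_abs (n : ℝ)
        nlinarith
      have h3 := mul_le_mul_of_nonneg_right h2 (sq_nonneg ‖w n‖)
      linarith [habs n hn]
  have hterm : ∀ n : ℤ, (1 + (n : ℝ) ^ 2) ^ (-ε) * ‖w n‖ ^ 2
      ≤ 2 * (K * M) ^ 2 * (1 + (n : ℝ) ^ 2) ^ (-(1 / 2 + ε)) := by
    intro n
    have g0 : (0 : ℝ) < 1 + (n : ℝ) ^ 2 := by positivity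
    have e : (1 + (n : ℝ) ^ 2) ^ (-ε)
        = Real.sqrt (1 + (n : ℝ) ^ 2) * (1 + (n : ℝ) ^ 2) ^ (-(1 / 2 + ε)) := by
      rw [Real.sqrt_eq_rpow, ← Real.rpow_add g0]; congr 1; ring
    rw [e]
    have := mul_le_mul_of_nonneg_right (hbd n)
      (by positivity : 0 ≤ (1 + (n : ℝ) ^ 2) ^ (-(1 / 2 + ε)))
    linarith
  have hmaj := hZs.mul_left (2 * (K * M) ^ 2)
  have hsum : Summable fun n : ℤ => (1 + (n : ℝ) ^ 2) ^ (-ε) * ‖w n‖ ^ 2 :=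
    Summable.of_nonneg_of_le (fun n => by positivity) hterm hmaj
  refine ⟨hsum, ?_⟩
  have hle := hsum.tsum_le_tsum hterm hmaj
  rw [tsum_mul_left, ← hZ] at hle
  have h1 : Real.sqrt (∑' n : ℤ, (1 + (n : ℝ) ^ 2) ^ (-ε) * ‖w n‖ ^ 2)
      ≤ Real.sqrt (2 * Z) * (K * M) := by
    rw [Real.sqrt_le_left (by positivity), mul_pow, Real.sq_sqrt (by positivity)]
    linarith
  refine h1.trans ?_
  have h2 : C * F + 10 * C * W = (Real.sqrt (2 * Z) * K + 1) * M := by rw [hC, hM]; ring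
  rw [h2]
  nlinarith
end

section
/- Let α > 1 and δ ∈ (0, 1/2). Then there exists a constant C > 0 such that for all trigonometric polynomials u and ζ on the circle, ∫_0^{2π} |α·cos y − 1|^{−1/2} · |u(y)| · |ζ(y)| dy ≤ C · ‖u‖_{H^{1/2}} · ‖ζ‖_{H^δ}. -/
open Complex Real MeasureTheory

noncomputable def TP (c : ℤ → ℂ) (F : Finset ℤ) (y : ℝ) : ℂ :=
  ∑ n ∈ F, c n * Complex.exp (Complex.I * (n : ℂ) * (y : ℂ))

lemma TP_cont (c : ℤ → ℂ) (F : Finset ℤ) : Continuous (TP c F) := by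
  unfold TP; fun_prop

lemma exp_int (k : ℤ) : ∫ y in (0:ℝ)..(2*π), Complex.exp (Complex.I * (k:ℂ) * (y:ℂ))
    = if k = 0 then (2*π:ℂ) else 0 := by
  split_ifs with h
  · subst h; simp
  · have hk : Complex.I * (k:ℂ) ≠ 0 := by simp [h]
    rw [integral_exp_mul_complex hk]
    have : Complex.exp (Complex.I * (k:ℂ) * ((2*π:ℝ):ℂ)) = 1 := by
      rw [Complex.exp_eq_one_iff]
      exact ⟨k, by push_cast; ring⟩
    rw [this]; simp

lemma TP_parseval (c : ℤ → ℂ) (F : Finset ℤ) :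
    ∫ y in Set.Ioc (0:ℝ) (2*π), ‖TP c F y‖^2 = 2*π * ∑ n ∈ F, ‖c n‖^2 := by
  have key : ∀ y : ℝ, ((‖TP c F y‖^2 : ℝ) : ℂ) = ∑ n ∈ F, ∑ m ∈ F,
      (c n * (starRingEnd ℂ) (c m)) * Complex.exp (Complex.I * ((n - m : ℤ):ℂ) * (y:ℂ)) := by
    intro y
    rw [← Complex.normSq_eq_norm_sq, ← Complex.mul_conj]
    unfold TP
    rw [map_sum, Finset.sum_mul_sum]
    refine Finset.sum_congr rfl fun n _ => Finset.sum_congr rfl fun m _ => ?_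
    rw [map_mul, ← Complex.exp_conj]
    have : Complex.exp (Complex.I * ((n - m : ℤ):ℂ) * (y:ℂ))
      = Complex.exp (Complex.I * (n:ℂ) * (y:ℂ)) *
        Complex.exp ((starRingEnd ℂ) (Complex.I * (m:ℂ) * (y:ℂ))) := by
      rw [← Complex.exp_add]; congr 1
      simp; ring
    rw [this]; ring
  have h0 : (0:ℝ) ≤ 2*π := by positivity
  apply Complex.ofReal_injective
  rw [← integral_complex_ofReal]
  simp_rw [key]
  rw [← intervalIntegral.integral_of_le h0, intervalIntegral.integral_finsetSum]
  · simp only [Complex.ofReal_mul, Complex.ofReal_sum, Complex.ofReal_pow, Complex.ofReal_ofNat]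
    rw [Finset.mul_sum]
    refine Finset.sum_congr rfl fun n hn => ?_
    rw [intervalIntegral.integral_finsetSum]
    · simp_rw [intervalIntegral.integral_const_mul, exp_int, sub_eq_zero]
      simp [hn, Complex.mul_conj, Complex.normSq_eq_norm_sq]
      ring
    · intro m _; apply Continuous.intervalIntegrable; fun_prop
  · intro m _; apply Continuous.intervalIntegrable; fun_prop

lemma summ {ε : ℝ} (hε : 0 < ε) : Summable fun n : ℤ => (1 + (n:ℝ)^2) ^ (-(1/2+ε)) := by
  have h := (Real.summable_abs_int_rpow (b := 1+2*ε) (by linarith))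
  rw [← Finset.summable_compl_iff ({0} : Finset ℤ)] at h ⊢
  refine Summable.of_nonneg_of_le (fun n => by positivity) (fun n => ?_) h
  have hn : ((n:ℤ):ℝ) ≠ 0 := by
    have := n.2; simpa using this
  have : |((n:ℤ):ℝ)| ^ (-(1+2*ε)) = (((n:ℤ):ℝ)^2) ^ (-(1/2+ε)) := by
    rw [← sq_abs, ← Real.rpow_natCast, ← Real.rpow_mul (abs_nonneg _)]
    congr 1; push_cast; ring
  rw [this]
  apply Real.rpow_le_rpow_of_nonpos (by positivity) (by linarith) (by linarith)

/-- localized estimate -/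
lemma level {s ε : ℝ} (hε : 0 < ε) (hs0 : 0 ≤ s) (hs : s ≤ 1/2) {K : ℝ} (hK : 0 ≤ K) :
    ∃ C : ℝ, 0 ≤ C ∧ ∀ (c : ℤ → ℂ) (F : Finset ℤ) (E : Set ℝ) (L : ℝ), 1 ≤ L →
      MeasurableSet E → E ⊆ Set.Ioc 0 (2*π) → volume.real E ≤ K * L ^ (-(1/2:ℝ)) →
      ∫ y in E, ‖TP c F y‖^2 ≤ C * L ^ (ε - s) * ∑ n ∈ F, (1 + (n:ℝ)^2)^s * ‖c n‖^2 := by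
  set S := ∑' n : ℤ, (1 + (n:ℝ)^2) ^ (-(1/2+ε)) with hS
  have hS0 : 0 ≤ S := tsum_nonneg fun n => by positivity
  refine ⟨2 * (K * S + 2*π), by positivity, ?_⟩
  intro c F E L hL hE hEs hvol
  have hL0 : 0 < L := by linarith
  set H := ∑ n ∈ F, (1 + (n:ℝ)^2)^s * ‖c n‖^2 with hH
  have hH0 : 0 ≤ H := Finset.sum_nonneg fun n _ => by positivity
  set A := F.filter fun n : ℤ => 1 + (n:ℝ)^2 ≤ L with hA
  set B := F.filter fun n : ℤ => ¬ (1 + (n:ℝ)^2 ≤ L) with hB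
  have hsplit : ∀ y, TP c F y = TP c A y + TP c B y := by
    intro y; unfold TP; exact (Finset.sum_filter_add_sum_filter_not _ _ _).symm
  have hpt : ∀ y, ‖TP c F y‖^2 ≤ 2 * ‖TP c A y‖^2 + 2 * ‖TP c B y‖^2 := by
    intro y
    have h1 := norm_add_le (TP c A y) (TP c B y)
    rw [← hsplit] at h1
    nlinarith [norm_nonneg (TP c F y), sq_nonneg (‖TP c A y‖ - ‖TP c B y‖), norm_nonneg (TP c A y), norm_nonneg (TP c B y)]
  have hint : ∀ G : Finset ℤ, IntegrableOn (fun y => ‖TP c G y‖^2) (Set.Ioc 0 (2*π)) := by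
    intro G
    have : Continuous fun y => ‖TP c G y‖^2 := by have := TP_cont c G; fun_prop
    exact this.integrableOn_Ioc
  have hlow : ∀ y, ‖TP c A y‖^2 ≤ S * L ^ (1/2+ε-s) * H := by
    intro y
    have h1 : ‖TP c A y‖ ≤ ∑ n ∈ A, (1 + (n:ℝ)^2)^(-s/2) * ((1 + (n:ℝ)^2)^(s/2) * ‖c n‖) := by
      unfold TP
      refine (norm_sum_le _ _).trans (Finset.sum_le_sum fun n _ => ?_)
      rw [norm_mul, ← mul_assoc, ← Real.rpow_add (by positivity)]
      have : ‖Complex.exp (Complex.I * (n : ℂ) * (y : ℂ))‖ = 1 := by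
        rw [Complex.norm_exp]; simp
      rw [this]; simp [neg_div]
    have h2 : ‖TP c A y‖^2 ≤ (∑ n ∈ A, ((1 + (n:ℝ)^2)^(-s/2))^2) *
        ∑ n ∈ A, ((1 + (n:ℝ)^2)^(s/2) * ‖c n‖)^2 :=
      (pow_le_pow_left₀ (norm_nonneg _) h1 2).trans (Finset.sum_mul_sq_le_sq_mul_sq _ _ _)
    refine h2.trans ?_
    gcongr
    · have : S * L ^ (1/2+ε-s) ≥ ∑ n ∈ A, (1 + (n:ℝ)^2) ^ (-(1/2+ε)) * L ^ (1/2+ε-s) := by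
        rw [← Finset.sum_mul]
        gcongr
        exact (summ hε).sum_le_tsum _ fun n _ => by positivity
      refine le_trans (Finset.sum_le_sum fun n hn => ?_) this
      have hn' : 1 + (n:ℝ)^2 ≤ L := (Finset.mem_filter.1 hn).2
      calc ((1 + (n:ℝ)^2)^(-s/2))^2 = (1 + (n:ℝ)^2) ^ (-(1/2+ε)) * (1 + (n:ℝ)^2) ^ (1/2+ε-s) := by
            rw [← Real.rpow_natCast, ← Real.rpow_mul (by positivity), ← Real.rpow_add (by positivity)]
            congr 1; push_cast; ring
        _ ≤ _ := by
            gcongr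
            linarith
    · refine le_trans (le_of_eq ?_) (Finset.sum_le_sum_of_subset_of_nonneg (Finset.filter_subset (fun n : ℤ => 1 + (n:ℝ)^2 ≤ L) F)
        fun n _ _ => by positivity)
      refine Finset.sum_congr rfl fun n _ => ?_
      rw [mul_pow, ← Real.rpow_natCast ((1 + (n:ℝ)^2)^(s/2)), ← Real.rpow_mul (by positivity)]
      congr 2; push_cast; ring
  have hEfin : volume E ≠ ⊤ := ne_top_of_le_ne_top measure_Ioc_lt_top.ne (measure_mono hEs)
  have hlowint : ∫ y in E, ‖TP c A y‖^2 ≤ K * S * L ^ (ε - s) * H := by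
    calc ∫ y in E, ‖TP c A y‖^2 ≤ ∫ y in E, S * L ^ (1/2+ε-s) * H := by
          apply setIntegral_mono ((hint A).mono_set hEs) (integrableOn_const hEfin) hlow
      _ = volume.real E * (S * L ^ (1/2+ε-s) * H) := by simp
      _ ≤ (K * L ^ (-(1/2:ℝ))) * (S * L ^ (1/2+ε-s) * H) := by gcongr
      _ = K * S * (L ^ (-(1/2:ℝ)) * L ^ (1/2+ε-s)) * H := by ring
      _ = _ := by rw [← Real.rpow_add hL0]; ring_nf
  have hhigh : ∫ y in E, ‖TP c B y‖^2 ≤ 2*π * L ^ (ε - s) * H := by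
    calc ∫ y in E, ‖TP c B y‖^2 ≤ ∫ y in Set.Ioc (0:ℝ) (2*π), ‖TP c B y‖^2 :=
          setIntegral_mono_set (hint B) (Filter.Eventually.of_forall fun y => by positivity)
            hEs.eventuallyLE
      _ = 2*π * ∑ n ∈ B, ‖c n‖^2 := TP_parseval c B
      _ ≤ 2*π * (L ^ (ε - s) * H) := by
          gcongr
          calc ∑ n ∈ B, ‖c n‖^2 ≤ ∑ n ∈ B, L^(ε-s) * ((1 + (n:ℝ)^2)^s * ‖c n‖^2) := by
                refine Finset.sum_le_sum fun n hn => ?_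
                have hn' : L ≤ 1 + (n:ℝ)^2 := (not_le.1 (Finset.mem_filter.1 hn).2).le
                have h1 : 1 ≤ L^(ε-s) * (1 + (n:ℝ)^2)^s := by
                  calc (1:ℝ) ≤ L ^ ε := Real.one_le_rpow hL hε.le
                    _ = L^(ε-s) * L^s := by rw [← Real.rpow_add hL0]; ring_nf
                    _ ≤ _ := by gcongr
                rw [← mul_assoc]
                exact le_mul_of_one_le_left (by positivity) h1
            _ = L^(ε-s) * ∑ n ∈ B, ((1 + (n:ℝ)^2)^s * ‖c n‖^2) := by rw [Finset.mul_sum]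
            _ ≤ _ := by
                gcongr
                exact Finset.sum_le_sum_of_subset_of_nonneg (Finset.filter_subset _ F)
                  fun n _ _ => by positivity
      _ = _ := by ring
  calc ∫ y in E, ‖TP c F y‖^2 ≤ ∫ y in E, (2 * ‖TP c A y‖^2 + 2 * ‖TP c B y‖^2) := by
        apply setIntegral_mono ((hint F).mono_set hEs) _ hpt
        exact (((hint A).mono_set hEs).const_mul 2).add (((hint B).mono_set hEs).const_mul 2)
    _ = 2 * (∫ y in E, ‖TP c A y‖^2) + 2 * (∫ y in E, ‖TP c B y‖^2) := by
        rw [integral_add (((hint A).mono_set hEs).const_mul 2) (((hint B).mono_set hEs).const_mul 2),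
          integral_const_mul, integral_const_mul]
    _ ≤ _ := by nlinarith

lemma lower {α : ℝ} (hα : 1 < α) : ∃ κ y0 : ℝ, 0 < κ ∧
    (∀ y ∈ Set.Icc 0 π, κ * |y - y0| ≤ |α * Real.cos y - 1|) := by
  set y0 := Real.arccos (1/α) with hy0
  have ha : 0 < α := by linarith
  have h1 : 1/α < 1 := by rw [div_lt_one ha]; exact hα
  have h1' : 0 < 1/α := by positivity
  have hc : Real.cos y0 = 1/α := Real.cos_arccos (by linarith) h1.le
  have hy1 : 0 < y0 := Real.arccos_pos.2 h1
  have hy2 : y0 < π/2 := Real.arccos_lt_pi_div_two.2 h1'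
  have hs : 0 < Real.sin (y0/2) := Real.sin_pos_of_pos_of_lt_pi (by linarith) (by linarith)
  refine ⟨α * (2 * Real.sin (y0/2) * (1/π)), y0, by positivity, ?_⟩
  rintro y ⟨hya, hyb⟩
  have e : α * Real.cos y - 1 = α * (Real.cos y - Real.cos y0) := by
    rw [hc]; field_simp
  rw [e, Real.cos_sub_cos, abs_mul, abs_of_pos ha, abs_mul, abs_mul, mul_assoc α]
  have p1 : Real.sin (y0/2) ≤ |Real.sin ((y+y0)/2)| := by
    refine le_trans ?_ (le_abs_self _)
    rcases le_total ((y+y0)/2) (π/2) with h | h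
    · apply Real.sin_le_sin_of_le_of_le_pi_div_two <;> linarith
    · rw [← Real.sin_pi_sub ((y+y0)/2)]
      apply Real.sin_le_sin_of_le_of_le_pi_div_two <;> linarith
  have p2 : (1/π) * |y - y0| ≤ |Real.sin ((y-y0)/2)| := by
    have := Real.mul_abs_le_abs_sin (x := (y-y0)/2) (by rw [abs_le]; constructor <;> linarith)
    refine le_trans (le_of_eq ?_) this
    rw [abs_div, abs_two]; field_simp
  have : |(-2:ℝ)| = 2 := by norm_num
  rw [this]
  have : 2 * Real.sin (y0/2) * (1/π) * |y-y0| ≤ 2 * |Real.sin ((y+y0)/2)| * |Real.sin ((y-y0)/2)| := by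
    rw [mul_assoc _ (1/π)]
    gcongr
  exact mul_le_mul_of_nonneg_left this ha.le

def lev (α : ℝ) (h : ℝ) : Set ℝ := {y | y ∈ Set.Ioc 0 (2*π) ∧ |α * Real.cos y - 1| ≤ h}

lemma lev_meas (α h : ℝ) : MeasurableSet (lev α h) := by
  apply MeasurableSet.inter measurableSet_Ioc
  have h1 : Measurable fun y : ℝ => |α * Real.cos y - 1| := by fun_prop
  exact measurableSet_le h1 measurable_const

lemma lev_vol {α : ℝ} (hα : 1 < α) : ∃ K, 0 ≤ K ∧ ∀ h : ℝ, 0 ≤ h → volume.real (lev α h) ≤ K * h := by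
  obtain ⟨κ, y0, hκ, H⟩ := lower hα
  refine ⟨4/κ, by positivity, fun h hh => ?_⟩
  have hsub : lev α h ⊆ Metric.closedBall y0 (h/κ) ∪ Metric.closedBall (2*π-y0) (h/κ) := by
    rintro y ⟨⟨h1, h2⟩, h3⟩
    rcases le_total y π with hy | hy
    · left
      rw [Metric.mem_closedBall, Real.dist_eq, le_div_iff₀ hκ, mul_comm]
      exact (H y ⟨h1.le, hy⟩).trans h3
    · right
      rw [Metric.mem_closedBall, Real.dist_eq, le_div_iff₀ hκ, mul_comm]
      have := H (2*π - y) ⟨by linarith, by linarith⟩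
      rw [Real.cos_two_pi_sub] at this
      rw [show |y - (2*π - y0)| = |2*π - y - y0| by rw [← abs_neg]; ring_nf]
      exact this.trans h3
  calc volume.real (lev α h) ≤ volume.real (Metric.closedBall y0 (h/κ) ∪ Metric.closedBall (2*π-y0) (h/κ)) :=
        measureReal_mono hsub (ne_of_lt (lt_of_le_of_lt (measure_union_le _ _) (ENNReal.add_lt_top.2 ⟨measure_closedBall_lt_top, measure_closedBall_lt_top⟩)))
    _ ≤ _ := measureReal_union_le _ _
    _ = 4/κ*h := by
      rw [Real.volume_real_closedBall (by positivity), Real.volume_real_closedBall (by positivity)]; ring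

lemma ptw {b : ℝ} (hb : 0 < b) {x : ℝ} (hx : 0 ≤ x) : ENNReal.ofReal (x ^ (-b)) ≤
    1 + ∑' j : ℕ, ENNReal.ofReal ((2:ℝ)^(b*(j+1))) * Set.indicator {z : ℝ | z ≤ (1/2:ℝ)^j} 1 x := by
  rcases hx.eq_or_lt with h | h
  · subst h; rw [Real.zero_rpow (by linarith)]; simp
  rcases le_or_gt 1 x with h1 | h1
  · refine le_trans ?_ (le_add_right le_rfl)
    rw [← ENNReal.ofReal_one]
    exact ENNReal.ofReal_le_ofReal (Real.rpow_le_one_of_one_le_of_nonpos h1 (by linarith))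
  · obtain ⟨j, hj1, hj2⟩ := exists_nat_pow_near_of_lt_one h h1.le (by norm_num : (0:ℝ) < 1/2) (by norm_num)
    refine le_trans ?_ (le_add_left (ENNReal.le_tsum j))
    rw [Set.indicator_of_mem (by exact hj2)]
    simp only [Pi.one_apply, mul_one]
    apply ENNReal.ofReal_le_ofReal
    calc x^(-b) ≤ ((1/2:ℝ)^(j+1))^(-b) := Real.rpow_le_rpow_of_nonpos (by positivity) hj1.le (by linarith)
      _ = (2:ℝ)^(b*(j+1)) := by
        rw [one_div, inv_pow, Real.rpow_neg (by positivity), Real.inv_rpow (by positivity), inv_inv,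
          ← Real.rpow_natCast, ← Real.rpow_mul (by norm_num)]
        push_cast; ring_nf

/-- weighted L² estimate -/
lemma weighted {α : ℝ} (hα : 1 < α) {s ε b : ℝ} (hε : 0 < ε) (hb : 0 < b) (hs : s ≤ 1/2)
    (hbs : b < 2 * (s - ε)) :
    ∃ C : ℝ, 0 < C ∧ ∀ (c : ℤ → ℂ) (F : Finset ℤ),
      ∫⁻ y in Set.Ioc (0:ℝ) (2*π), ENNReal.ofReal (|α * Real.cos y - 1| ^ (-b) * ‖TP c F y‖^2)
        ≤ ENNReal.ofReal (C * ∑ n ∈ F, (1 + (n:ℝ)^2)^s * ‖c n‖^2) := by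
  obtain ⟨K, hK, hvol⟩ := lev_vol hα
  have hs0 : 0 ≤ s := by linarith
  obtain ⟨C, hC, hlev⟩ := level hε hs0 hs hK
  set q : ℝ := 2 ^ (b - 2 * (s - ε)) with hq
  have hq0 : 0 < q := by positivity
  have hq1 : q < 1 := Real.rpow_lt_one_of_one_lt_of_neg (by norm_num) (by linarith)
  have hsum : Summable fun j : ℕ => (2:ℝ)^b * C * q^j :=
    (summable_geometric_of_lt_one hq0.le hq1).mul_left _
  set D : ℝ := ∑' j : ℕ, (2:ℝ)^b * C * q^j with hD
  have hD0 : 0 ≤ D := tsum_nonneg fun j => by positivity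
  refine ⟨2*π + D, by positivity, fun c F => ?_⟩
  set H := ∑ n ∈ F, (1 + (n:ℝ)^2)^s * ‖c n‖^2 with hH
  have hH0 : 0 ≤ H := Finset.sum_nonneg fun n _ => by positivity
  have hcont : Continuous fun y => ‖TP c F y‖^2 := by have := TP_cont c F; fun_prop
  have hmeas : Measurable fun y => ENNReal.ofReal (‖TP c F y‖^2) := hcont.measurable.ennreal_ofReal
  have hint : IntegrableOn (fun y => ‖TP c F y‖^2) (Set.Ioc 0 (2*π)) := hcont.integrableOn_Ioc
  have hbase : ∫⁻ y in Set.Ioc (0:ℝ) (2*π), ENNReal.ofReal (‖TP c F y‖^2) ≤ ENNReal.ofReal (2*π*H) := by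
    rw [← ofReal_integral_eq_lintegral_ofReal hint (Filter.Eventually.of_forall fun y => by positivity),
      TP_parseval]
    apply ENNReal.ofReal_le_ofReal
    gcongr
    refine Finset.sum_le_sum fun n _ => ?_
    exact le_mul_of_one_le_left (by positivity) (Real.one_le_rpow (by nlinarith [sq_nonneg (n:ℝ)]) hs0)
  have hsub : ∀ h, lev α h ⊆ Set.Ioc 0 (2*π) := fun h y hy => hy.1
  have hj : ∀ j : ℕ, ENNReal.ofReal ((2:ℝ)^(b*(j+1))) *
      ∫⁻ y in lev α ((1/2:ℝ)^j), ENNReal.ofReal (‖TP c F y‖^2) ≤ ENNReal.ofReal ((2:ℝ)^b * C * q^j * H) := by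
    intro j
    rw [← ofReal_integral_eq_lintegral_ofReal (hint.mono_set (hsub _))
      (Filter.Eventually.of_forall fun y => by positivity), ← ENNReal.ofReal_mul (by positivity)]
    apply ENNReal.ofReal_le_ofReal
    have h4 : ∀ t : ℝ, ((4:ℝ)^j)^t = (2:ℝ)^(2*j*t) := by
      intro t
      rw [show (4:ℝ) = 2^(2:ℝ) by norm_num, ← Real.rpow_natCast, ← Real.rpow_mul (by norm_num),
        ← Real.rpow_mul (by norm_num), mul_assoc]
    have h2 : (1/2:ℝ)^j = ((4:ℝ)^j)^(-(1/2:ℝ)) := by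
      rw [h4, one_div, inv_pow, ← Real.rpow_natCast, ← Real.rpow_neg (by norm_num)]
      congr 1; ring
    have := hlev c F (lev α ((1/2:ℝ)^j)) (4^j) (one_le_pow₀ (by norm_num)) (lev_meas _ _) (hsub _)
      (by rw [← h2]; exact hvol _ (by positivity))
    calc (2:ℝ)^(b*(j+1)) * ∫ y in lev α ((1/2:ℝ)^j), ‖TP c F y‖^2
        ≤ (2:ℝ)^(b*(j+1)) * (C * ((4:ℝ)^j)^(ε-s) * H) := by gcongr
      _ = C * ((2:ℝ)^(b*(j+1)) * ((4:ℝ)^j)^(ε-s)) * H := by ring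
      _ = C * ((2:ℝ)^b * q^j) * H := by
        congr 2
        rw [h4, hq, ← Real.rpow_natCast, ← Real.rpow_mul (by norm_num), ← Real.rpow_add (by norm_num),
          ← Real.rpow_add (by norm_num)]
        congr 1; ring
      _ = _ := by ring
  calc ∫⁻ y in Set.Ioc (0:ℝ) (2*π), ENNReal.ofReal (|α * Real.cos y - 1| ^ (-b) * ‖TP c F y‖^2)
      ≤ ∫⁻ y in Set.Ioc (0:ℝ) (2*π), (ENNReal.ofReal (‖TP c F y‖^2) + ∑' j : ℕ,
          ENNReal.ofReal ((2:ℝ)^(b*(j+1))) *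
            Set.indicator (lev α ((1/2:ℝ)^j)) (fun y => ENNReal.ofReal (‖TP c F y‖^2)) y) := by
        refine setLIntegral_mono' measurableSet_Ioc fun y hy => ?_
        rw [ENNReal.ofReal_mul (by positivity)]
        refine (mul_le_mul_left (ptw hb (abs_nonneg _)) _).trans (le_of_eq ?_)
        rw [add_mul, one_mul, ← ENNReal.tsum_mul_right]
        congr 1
        refine tsum_congr fun j => ?_
        rw [mul_assoc]
        congr 1
        by_cases h : |α * Real.cos y - 1| ≤ (1/2:ℝ)^j
        · rw [Set.indicator_of_mem (by exact h), Set.indicator_of_mem (by exact ⟨hy, h⟩)]; simp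
        · rw [Set.indicator_of_notMem (by exact h), Set.indicator_of_notMem (fun h' => h h'.2)]; simp
    _ = (∫⁻ y in Set.Ioc (0:ℝ) (2*π), ENNReal.ofReal (‖TP c F y‖^2)) + ∑' j : ℕ,
          ENNReal.ofReal ((2:ℝ)^(b*(j+1))) *
            ∫⁻ y in lev α ((1/2:ℝ)^j), ENNReal.ofReal (‖TP c F y‖^2) := by
        rw [lintegral_add_left hmeas, lintegral_tsum]
        · congr 1
          refine tsum_congr fun j => ?_
          rw [lintegral_const_mul _ (hmeas.indicator (lev_meas _ _)), lintegral_indicator (lev_meas _ _),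
            Measure.restrict_restrict (lev_meas _ _), Set.inter_eq_left.2 (hsub _)]
        · intro j
          exact ((hmeas.indicator (lev_meas _ _)).const_mul _).aemeasurable
    _ ≤ ENNReal.ofReal (2*π*H) + ∑' j : ℕ, ENNReal.ofReal ((2:ℝ)^b * C * q^j * H) :=
        add_le_add hbase (ENNReal.tsum_le_tsum hj)
    _ = ENNReal.ofReal ((2*π + D) * H) := by
        rw [← ENNReal.ofReal_tsum_of_nonneg (fun j => by positivity) (hsum.mul_right H), tsum_mul_right,
          ← ENNReal.ofReal_add (by positivity) (by positivity), add_mul]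

lemma tsum_TP (c : ℤ → ℂ) (hc : (Function.support c).Finite) (y : ℝ) :
    ∑' n : ℤ, c n * Complex.exp (Complex.I * (n : ℂ) * (y : ℂ)) = TP c hc.toFinset y := by
  unfold TP
  refine tsum_eq_sum fun n hn => ?_
  have : c n = 0 := by simpa using hn
  simp [this]

lemma tsum_H (c : ℤ → ℂ) (hc : (Function.support c).Finite) (s : ℝ) :
    ∑' n : ℤ, (1 + (n : ℝ) ^ 2) ^ s * ‖c n‖ ^ 2
      = ∑ n ∈ hc.toFinset, (1 + (n : ℝ) ^ 2) ^ s * ‖c n‖ ^ 2 := by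
  refine tsum_eq_sum fun n hn => ?_
  have : c n = 0 := by simpa using hn
  simp [this]

/-- Estimate (5.functional): for `α > 1` and `0 < δ < 1/2` there is `C > 0` such that
for all trigonometric polynomials `u = ∑ c_n e^{iny}` and `ζ = ∑ d_n e^{iny}`,
`∫_0^{2π} |α cos y - 1|^{-1/2} |u(y)| |ζ(y)| dy ≤ C ‖u‖_{H^{1/2}} ‖ζ‖_{H^δ}`,
with `‖∑ c_n e^{iny}‖_{H^s}² = ∑ (1+n²)^s |c_n|²`. -/
theorem degenerate_weight_estimate (α : ℝ) (hα : 1 < α) (δ : ℝ) (hδ0 : 0 < δ)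
    (hδ : δ < 1 / 2) :
    ∃ C : ℝ, 0 < C ∧
      ∀ c d : ℤ → ℂ, (Function.support c).Finite → (Function.support d).Finite →
        ∫ y in Set.Ioc (0 : ℝ) (2 * π),
            |α * Real.cos y - 1| ^ (-(1 / 2 : ℝ))
              * ‖∑' n : ℤ, c n * Complex.exp (Complex.I * (n : ℂ) * (y : ℂ))‖
              * ‖∑' n : ℤ, d n * Complex.exp (Complex.I * (n : ℂ) * (y : ℂ))‖
          ≤ C * Real.sqrt (∑' n : ℤ, (1 + (n : ℝ) ^ 2) ^ ((1 / 2 : ℝ)) * ‖c n‖ ^ 2)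
              * Real.sqrt (∑' n : ℤ, (1 + (n : ℝ) ^ 2) ^ δ * ‖d n‖ ^ 2) := by
  obtain ⟨C1, hC1, h1⟩ := weighted hα (s := 1/2) (ε := δ/4) (b := 1-δ) (by linarith) (by linarith)
    le_rfl (by linarith)
  obtain ⟨C2, hC2, h2⟩ := weighted hα (s := δ) (ε := δ/4) (b := δ) (by linarith) (by linarith)
    hδ.le (by linarith)
  refine ⟨Real.sqrt C1 * Real.sqrt C2, by positivity, fun c d hc hd => ?_⟩
  simp_rw [tsum_TP c hc, tsum_TP d hd]
  rw [tsum_H c hc, tsum_H d hd]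
  set F := hc.toFinset
  set G := hd.toFinset
  have k1 := h1 c F
  have k2 := h2 d G
  set H1 := ∑ n ∈ F, (1 + (n : ℝ) ^ 2) ^ (1/2:ℝ) * ‖c n‖ ^ 2 with hH1
  set H2 := ∑ n ∈ G, (1 + (n : ℝ) ^ 2) ^ δ * ‖d n‖ ^ 2 with hH2
  have hH10 : 0 ≤ H1 := Finset.sum_nonneg fun n _ => by positivity
  have hH20 : 0 ≤ H2 := Finset.sum_nonneg fun n _ => by positivity
  have hmF : Measurable fun y => ‖TP c F y‖ := (TP_cont c F).norm.measurable
  have hmG : Measurable fun y => ‖TP d G y‖ := (TP_cont d G).norm.measurable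
  have hw : ∀ b : ℝ, Measurable fun y : ℝ => |α * Real.cos y - 1| ^ b := by
    intro b
    have : Measurable fun y : ℝ => |α * Real.cos y - 1| := by fun_prop
    exact this.pow_const b
  have hsq : ∀ (b x t : ℝ), 0 ≤ x → 0 ≤ t →
      ENNReal.ofReal (x ^ (-b/2) * t) ^ (2:ℝ) = ENNReal.ofReal (x ^ (-b) * t^2) := by
    intro b x t hx ht
    rw [ENNReal.ofReal_rpow_of_nonneg (by positivity) (by norm_num), Real.mul_rpow (by positivity) ht,
      ← Real.rpow_mul hx]
    norm_num
  rw [integral_eq_lintegral_of_nonneg_ae (Filter.Eventually.of_forall fun y => by positivity)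
    (by exact (((hw _).mul hmF).mul hmG).aestronglyMeasurable)]
  have hR : 0 ≤ Real.sqrt C1 * Real.sqrt C2 * Real.sqrt H1 * Real.sqrt H2 := by positivity
  refine ENNReal.toReal_le_of_le_ofReal hR ?_
  have hsp : ∀ x : ℝ, 0 ≤ x → x ^ (-(1/2:ℝ)) = x ^ (-(1-δ)/2) * x ^ (-δ/2) := by
    intro x hx
    rcases hx.eq_or_lt with h | h
    · subst h
      rw [Real.zero_rpow (by norm_num), Real.zero_rpow (x := -δ/2) (by linarith)]; simp
    · rw [← Real.rpow_add h]; congr 1; ring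
  calc ∫⁻ y in Set.Ioc (0:ℝ) (2*π),
        ENNReal.ofReal (|α * Real.cos y - 1| ^ (-(1 / 2 : ℝ)) * ‖TP c F y‖ * ‖TP d G y‖)
      = ∫⁻ y in Set.Ioc (0:ℝ) (2*π), ((fun y => ENNReal.ofReal (|α * Real.cos y - 1| ^ (-(1-δ)/2) * ‖TP c F y‖)) *
          (fun y => ENNReal.ofReal (|α * Real.cos y - 1| ^ (-δ/2) * ‖TP d G y‖))) y := by
        refine lintegral_congr fun y => ?_
        rw [Pi.mul_apply, ← ENNReal.ofReal_mul (by positivity), hsp _ (abs_nonneg _)]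
        congr 1; ring
    _ ≤ _ := ENNReal.lintegral_mul_le_Lp_mul_Lq _ Real.HolderConjugate.two_two
        ((hw _).mul hmF).ennreal_ofReal.aemeasurable ((hw _).mul hmG).ennreal_ofReal.aemeasurable
    _ ≤ ENNReal.ofReal (C1 * H1) ^ (1/2:ℝ) * ENNReal.ofReal (C2 * H2) ^ (1/2:ℝ) := by
        simp_rw [hsq _ _ _ (abs_nonneg _) (norm_nonneg _)]
        gcongr
    _ = _ := by
        rw [ENNReal.ofReal_rpow_of_nonneg (by positivity) (by norm_num),
          ENNReal.ofReal_rpow_of_nonneg (by positivity) (by norm_num),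
          ← ENNReal.ofReal_mul (by positivity), ← Real.sqrt_eq_rpow, ← Real.sqrt_eq_rpow,
          Real.sqrt_mul hC1.le, Real.sqrt_mul hC2.le]
        congr 1; ring
end
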